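/- arXiv:2501.06840 — 2 statements merged into one kernel-verified Lean document; each statement's English description precedes it below -/
import Mathlib

section
/- Let n ≥ 3 and let φ : U(n) → M_n be a continuous, commutativity-preserving and spectrum-shrinking map. Then there exists T ∈ GL(n) such that either φ(X) = T X T⁻¹ for all X ∈ U(n), or φ(X) = T Xᵗ T⁻¹ for all X ∈ U(n) (where Xᵗ denotes the transpose). -/
open Matrix

/-! For a unitary `V`, the unitary matrices diagonalised by `V` whose eigenvalue angles lie in the
open Weyl alcove commute, have distinct eigenvalues, and form a connected family. By connectedness
the eigenvalues selected by `φ` are given by the same indices throughout `U(n)` times the alcove;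
rotating a matrix whose eigenvalues are the `n`-th roots of unity shifts these indices cyclically,
so every eigenvalue is selected exactly once. Hence the images of the matrices diagonalised by `V`
are diagonalised by one common frame, with the same eigenvalues in the same order, and this persists
on the closed alcove, which contains eigenvalue angles for every unitary matrix.

Applied to reflections, this yields a continuous map of lines that sends the line of a sum of two
orthogonal vectors into the span of their images and, in a suitable basis, preserves the coordinate
hyperplanes. For `n ≥ 3` its action on slopes is, up to scalars, a continuous multiplicative map
`ℂ → ℂ`, which orthogonality forces to be additive, hence the identity or complex conjugation. So
the line map is induced by some `T`, or by `T` composed with conjugation, and since a unitary matrix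
is determined by its eigenvalues and eigenlines, `φ` is conjugation by `T`, up to transposition.
-/

open scoped Topology

/-! ### Eigenvalues of connected families of matrices -/

theorem exists_eq_of_pointwise_mem {X Y κ : Type*} [TopologicalSpace X] [PreconnectedSpace X]
    [Nonempty X] [TopologicalSpace Y] [T2Space Y] [Finite κ] {f : X → Y} {g : κ → X → Y}
    (hf : Continuous f) (hg : ∀ k, Continuous (g k))
    (hinj : ∀ x, Function.Injective fun k => g k x) (hmem : ∀ x, ∃ k, f x = g k x) :
    ∃ k, f = g k := by
  obtain ⟨x₀⟩ := ‹Nonempty X›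
  obtain ⟨k₀, hk₀⟩ := hmem x₀
  have hclosed (k : κ) : IsClosed {x | f x = g k x} := isClosed_eq hf (hg k)
  have hcompl : {x | f x = g k₀ x}ᶜ = ⋃ k : {k // k ≠ k₀}, {x | f x = g k x} := by
    ext x
    obtain ⟨k, hk⟩ := hmem x
    simp only [Set.mem_compl_iff, Set.mem_ofPred_eq, Set.mem_iUnion, Subtype.exists, exists_prop]
    refine ⟨fun hne => ⟨k, fun h => hne (h ▸ hk), hk⟩, ?_⟩
    rintro ⟨l, hl, hfl⟩ h
    exact hl (hinj x (hfl.symm.trans h))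
  have hclopen : IsClopen {x | f x = g k₀ x} :=
    ⟨hclosed k₀, isClosed_compl_iff.1 (hcompl ▸ isClosed_iUnion_of_finite fun k => hclosed k)⟩
  exact ⟨k₀, funext (Set.eq_univ_iff_forall.1 (hclopen.eq_univ ⟨x₀, hk₀⟩))⟩

section Spectrum

variable {P ι : Type*} [TopologicalSpace P] [PreconnectedSpace P] [Fintype ι] [DecidableEq ι]

theorem exists_charpoly_roots_eq_map [Nonempty P] {A : P → Matrix ι ι ℂ} {z : P → ι → ℂ}
    (hA : Continuous A) (hz : Continuous z) (hinj : ∀ p, Function.Injective (z p))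
    (hspec : ∀ p, spectrum ℂ (A p) ⊆ Set.range (z p)) :
    ∃ s : Multiset ι, s.card = Fintype.card ι ∧ ∀ p, (A p).charpoly.roots = s.map (z p) := by
  have hsplit (p : P) : (A p).charpoly = ((A p).charpoly.roots.map
      fun a => Polynomial.X - Polynomial.C a).prod :=
    (IsAlgClosed.splits _).eq_prod_roots_of_monic (charpoly_monic _)
  have hcard (p : P) : (A p).charpoly.roots.card = Fintype.card ι := by
    rw [← (IsAlgClosed.splits _).natDegree_eq_card_roots, charpoly_natDegree_eq_dim]
  let g (s : Sym ι (Fintype.card ι)) (p : P) (t : ℂ) : ℂ :=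
    ((s : Multiset ι).map fun k => t - z p k).prod
  have hg_eval (s : Sym ι (Fintype.card ι)) (p : P) (t : ℂ) : g s p t =
      Polynomial.eval t
        (((s : Multiset ι).map (z p)).map fun a => Polynomial.X - Polynomial.C a).prod := by
    simp [g, Polynomial.eval_multiset_prod, Multiset.map_map]
  have hroots (s : Sym ι (Fintype.card ι)) (p : P)
      (h : (fun t => Polynomial.eval t (A p).charpoly) = g s p) :
      (A p).charpoly.roots = (s : Multiset ι).map (z p) := by
    rw [Polynomial.funext fun t => (congrFun h t).trans (hg_eval s p t),
      Polynomial.roots_multiset_prod_X_sub_C]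
  have hg_inj (p : P) : Function.Injective fun s => g s p := fun s s' h => by
    have hprod := Polynomial.funext fun t =>
      (hg_eval s p t).symm.trans ((congrFun h t).trans (hg_eval s' p t))
    have hmap := congrArg Polynomial.roots hprod
    rw [Polynomial.roots_multiset_prod_X_sub_C, Polynomial.roots_multiset_prod_X_sub_C] at hmap
    exact Sym.coe_injective (Multiset.map_injective (hinj p) hmap)
  have hmem (p : P) : ∃ s, (fun t => Polynomial.eval t (A p).charpoly) = g s p := by
    have : CanLift ℂ ι (z p) (· ∈ Set.range (z p)) := ⟨fun _ ha => ha⟩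
    obtain ⟨s, hs⟩ := (Multiset.canLift (z p) (· ∈ Set.range (z p))).prf _ fun a ha =>
      hspec p (mem_spectrum_of_isRoot_charpoly (Polynomial.isRoot_of_mem_roots ha))
    refine ⟨Sym.mk s (by rw [← hcard p, ← hs, Multiset.card_map]), funext fun t => ?_⟩
    rw [hg_eval, Sym.coe_mk, hs, ← hsplit p]
  obtain ⟨s, hs⟩ := exists_eq_of_pointwise_mem
    (continuous_pi fun t => by simp only [eval_charpoly]; fun_prop) (fun s => by fun_prop)
    hg_inj hmem
  exact ⟨s, s.2, fun p => hroots s p (congrFun hs p)⟩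

theorem exists_mul_eq_mul_diagonal {A : Matrix ι ι ℂ} {z : ι → ℂ} (hz : Function.Injective z)
    (h : ∀ j, z j ∈ spectrum ℂ A) :
    ∃ S : (Matrix ι ι ℂ)ˣ, A * S = S * diagonal z := by
  have heig (j : ι) : ∃ v, Module.End.HasEigenvector (Matrix.toLin' A) (z j) v := by
    refine Module.End.HasEigenvalue.exists_hasEigenvector ?_
    rw [Module.End.hasEigenvalue_iff_mem_spectrum, spectrum_toLin']
    exact h j
  choose v hv using heig
  have hunit : IsUnit (Matrix.of v)ᵀ := by
    rw [isUnit_transpose, ← linearIndependent_rows_iff_isUnit]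
    exact Module.End.eigenvectors_linearIndependent' _ z hz v hv
  refine ⟨hunit.unit, ?_⟩
  ext i j
  have := congrFun (hv j).apply_eq_smul i
  rw [IsUnit.unit_spec, mul_diagonal, mul_comm]
  simpa [mul_apply, mulVec, dotProduct] using this

theorem eq_diagonal_of_commute {R : Type*} [CommRing R] [NoZeroDivisors R] {A : Matrix ι ι R}
    {d : ι → R} (hd : Function.Injective d) (h : Commute A (diagonal d)) :
    A = diagonal A.diag := by
  ext i j
  obtain rfl | hij := eq_or_ne i j
  · simp
  · have hentry := congrFun₂ h.eq i j
    rw [mul_diagonal, diagonal_mul] at hentry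
    have : (d j - d i) * A i j = 0 := by linear_combination hentry
    simpa [hij, sub_eq_zero, hd.eq_iff, hij.symm] using this

theorem mul_eq_mul_diagonal_of_commute {A : P → Matrix ι ι ℂ} {z : P → ι → ℂ}
    (hA : Continuous A) (hz : Continuous z) (hcomm : ∀ p q, Commute (A p) (A q))
    (hinj : ∀ p, Function.Injective (z p)) (hspec : ∀ p, spectrum ℂ (A p) ⊆ Set.range (z p))
    {S : (Matrix ι ι ℂ)ˣ} {p₀ : P} (h₀ : A p₀ * S = S * diagonal (z p₀)) (p : P) :
    A p * S = S * diagonal (z p) := by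
  have : Nonempty P := ⟨p₀⟩
  let B (p : P) : Matrix ι ι ℂ := (↑S⁻¹ : Matrix ι ι ℂ) * A p * S
  have hB₀ : B p₀ = diagonal (z p₀) := by simp [B, mul_assoc, h₀]
  have hBcomm (p : P) : Commute (B p) (B p₀) := by
    simp only [B, Commute, SemiconjBy, mul_assoc, S.mul_inv_cancel_left]
    rw [← mul_assoc (A p), hcomm p p₀, mul_assoc]
  have hBdiag (p : P) : B p = diagonal (B p).diag :=
    eq_diagonal_of_commute (hinj p₀) (hB₀ ▸ hBcomm p)
  have hmem (j : ι) (p : P) : ∃ k, B p j j = z p k := by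
    have hj : B p j j ∈ spectrum ℂ (B p) := by
      rw [hBdiag p, spectrum_diagonal]
      exact ⟨j, by simp⟩
    rw [spectrum.units_conjugate'] at hj
    obtain ⟨k, hk⟩ := hspec p hj
    exact ⟨k, hk.symm⟩
  have hBz (j : ι) : B p j j = z p j := by
    obtain ⟨k, hk⟩ := exists_eq_of_pointwise_mem (f := fun p => B p j j) (g := fun k p => z p k)
      (by fun_prop) (fun k => by fun_prop) hinj (hmem j)
    have hkj : z p₀ j = z p₀ k := by simpa [hB₀] using congrFun hk p₀
    exact (congrFun hk p).trans (congrArg (z p) (hinj p₀ hkj).symm)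
  calc A p * S = S * B p := by simp [B, mul_assoc]
    _ = S * diagonal (z p) := by rw [hBdiag p, show (B p).diag = z p from funext hBz]

end Spectrum

/-! ### Unitary matrices with prescribed eigenvectors and angles -/

section UnitarySpectralTheorem

variable {ι : Type*}

/-- The point `(e^{iθ_j})_j` of the torus with angles `θ`, with complex coordinates. -/
noncomputable def phases (θ : ι → ℝ) : ι → ℂ := fun j => Circle.exp (θ j)

@[fun_prop]
theorem continuous_phases : Continuous (phases : (ι → ℝ) → ι → ℂ) := by
  unfold phases
  fun_prop

variable [Fintype ι] [DecidableEq ι]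

open scoped Matrix.Norms.L2Operator in
theorem exists_isHermitian_exp_eq (X : unitaryGroup ι ℂ) :
    ∃ H : Matrix ι ι ℂ, H.IsHermitian ∧ NormedSpace.exp (Complex.I • H) = X := by
  have hnormal : IsStarNormal (X : Matrix ι ι ℂ) := inferInstance
  have harg : ContinuousOn (Complex.ofReal ∘ Complex.arg) (spectrum ℂ (X : Matrix ι ι ℂ)) :=
    (finite_spectrum _).continuousOn _
  refine ⟨cfc (Complex.ofReal ∘ Complex.arg) (X : Matrix ι ι ℂ), IsSelfAdjoint.cfc_arg _, ?_⟩
  rw [← CFC.exp_eq_normedSpace_exp (𝕜 := ℂ), ← cfc_smul .., ← cfc_comp' ..,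
    ← Complex.exp_eq_exp_ℂ]
  conv_rhs => rw [← cfc_id' ℂ (X : Matrix ι ι ℂ)]
  refine cfc_congr fun y hy => ?_
  have hnorm : ‖y‖ = 1 := spectrum.norm_eq_one_of_unitary X.2 hy
  simpa [hnorm, mul_comm] using Complex.norm_mul_exp_arg_mul_I y

/-- The diagonal unitary matrix with eigenvalue angles `θ`. -/
noncomputable def diagonalUnitary (θ : ι → ℝ) : unitaryGroup ι ℂ :=
  ⟨diagonal (phases θ), mem_unitaryGroup_iff.2 <| by
    rw [star_eq_conjTranspose, diagonal_conjTranspose, diagonal_mul_diagonal, ← diagonal_one]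
    congr 1
    ext j
    simp [phases, Complex.mul_conj, Complex.normSq_eq_norm_sq]⟩

/-- The unitary matrix whose eigenvectors are the columns of `V`, with eigenvalue angles `θ`. -/
noncomputable def unitaryOfAngles (V : unitaryGroup ι ℂ) (θ : ι → ℝ) : unitaryGroup ι ℂ :=
  V * diagonalUnitary θ * V⁻¹

theorem coe_unitaryOfAngles (V : unitaryGroup ι ℂ) (θ : ι → ℝ) :
    (unitaryOfAngles V θ : Matrix ι ι ℂ) = V * diagonal (phases θ) * star (V : Matrix ι ι ℂ) :=
  rfl

@[fun_prop]
theorem continuous_unitaryOfAngles {X : Type*} [TopologicalSpace X] {V : X → unitaryGroup ι ℂ}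
    {θ : X → ι → ℝ} (hV : Continuous V) (hθ : Continuous θ) :
    Continuous fun x => unitaryOfAngles (V x) (θ x) := by
  have hdiag : Continuous fun x => diagonalUnitary (θ x) :=
    (continuous_phases.comp hθ).matrix_diagonal.subtype_mk _
  unfold unitaryOfAngles
  fun_prop

theorem commute_unitaryOfAngles (V : unitaryGroup ι ℂ) (θ η : ι → ℝ) :
    Commute (unitaryOfAngles V θ) (unitaryOfAngles V η) := by
  have hdiag : Commute (diagonalUnitary θ) (diagonalUnitary η) :=
    Subtype.ext (commute_diagonal _ _).eq
  exact hdiag.map (MulAut.conj V)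

theorem spectrum_unitaryOfAngles (V : unitaryGroup ι ℂ) (θ : ι → ℝ) :
    spectrum ℂ (unitaryOfAngles V θ : Matrix ι ι ℂ) = Set.range (phases θ) := by
  rw [coe_unitaryOfAngles, Unitary.spectrum_star_right_conjugate, spectrum_diagonal]

theorem exists_unitaryOfAngles_eq (X : unitaryGroup ι ℂ) :
    ∃ V θ, unitaryOfAngles V θ = X := by
  obtain ⟨H, hH, hX⟩ := exists_isHermitian_exp_eq X
  let V := hH.eigenvectorUnitary
  have hV : (V : Matrix ι ι ℂ)⁻¹ = star (V : Matrix ι ι ℂ) :=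
    inv_eq_right_inv (Unitary.coe_mul_star_self V)
  have hV_unit : IsUnit (V : Matrix ι ι ℂ) := (Unitary.toUnits V).isUnit
  have hH_eq : Complex.I • H = V * diagonal (fun j => Complex.I * hH.eigenvalues j) *
      (V : Matrix ι ι ℂ)⁻¹ := by
    conv_lhs => rw [hH.spectral_theorem, Unitary.conjStarAlgAut_apply]
    rw [hV, ← smul_mul_assoc, ← mul_smul_comm, ← diagonal_smul]
    rfl
  refine ⟨V, hH.eigenvalues, Subtype.ext ?_⟩
  rw [coe_unitaryOfAngles, ← hX, hH_eq, exp_conj _ _ hV_unit, exp_diagonal, hV]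
  congr 3
  ext j
  rw [Pi.coe_exp, ← Complex.exp_eq_exp_ℂ, phases, Circle.coe_exp, mul_comm]

theorem exists_unitaryOfAngles_comp_perm (V : unitaryGroup ι ℂ) (θ : ι → ℝ)
    (σ : Equiv.Perm ι) : ∃ W, unitaryOfAngles W (θ ∘ σ) = unitaryOfAngles V θ := by
  let W := (V : Matrix ι ι ℂ).submatrix id σ
  have hW : W ∈ unitaryGroup ι ℂ := by
    rw [mem_unitaryGroup_iff, star_eq_conjTranspose, conjTranspose_submatrix, submatrix_mul_equiv,
      ← star_eq_conjTranspose, submatrix_id_id]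
    exact Unitary.coe_mul_star_self V
  refine ⟨⟨W, hW⟩, Subtype.ext ?_⟩
  have hdiag : diagonal (phases (θ ∘ σ)) = (diagonal (phases θ)).submatrix σ σ := by
    rw [submatrix_diagonal_equiv]
    rfl
  rw [coe_unitaryOfAngles, coe_unitaryOfAngles, hdiag, star_eq_conjTranspose,
    conjTranspose_submatrix, submatrix_mul_equiv, submatrix_mul_equiv, submatrix_id_id,
    star_eq_conjTranspose]

theorem unitaryOfAngles_congr {θ η : ι → ℝ} (h : phases θ = phases η) (V : unitaryGroup ι ℂ) :
    unitaryOfAngles V θ = unitaryOfAngles V η := Subtype.ext <| by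
  rw [coe_unitaryOfAngles, coe_unitaryOfAngles, h]

end UnitarySpectralTheorem

instance {ι : Type*} [Fintype ι] [DecidableEq ι] : PreconnectedSpace (unitaryGroup ι ℂ) := by
  refine ⟨isPreconnected_of_forall 1 fun X _ => ?_⟩
  obtain ⟨V, θ, rfl⟩ := exists_unitaryOfAngles_eq X
  let γ (t : ℝ) : unitaryGroup ι ℂ := unitaryOfAngles V (t • θ)
  have hγ : Continuous γ := by fun_prop
  have hγ₀ : γ 0 = 1 := Subtype.ext <| by
    have hphases : phases ((0 : ℝ) • θ) = 1 := by ext; simp [phases]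
    rw [coe_unitaryOfAngles, hphases, Pi.one_def, diagonal_one, mul_one]
    exact Unitary.coe_mul_star_self V
  have hγ₁ : γ 1 = unitaryOfAngles V θ := by simp only [γ, one_smul]
  exact ⟨Set.range γ, Set.subset_univ _, ⟨0, hγ₀⟩, ⟨1, hγ₁⟩, isPreconnected_range hγ⟩

section Alcove

/-- The open Weyl alcove of the unitary group: increasing lists of angles spanning less than one
turn. Every unitary matrix has a list of eigenvalue angles in its closure. -/
def weylAlcove (n : ℕ) : Set (Fin n → ℝ) :=
  {θ | StrictMono θ ∧ ∀ i j, θ i < θ j + 2 * Real.pi}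

variable {n : ℕ}

theorem openSegment_subset_weylAlcove {θ η : Fin n → ℝ} (hθ : Monotone θ)
    (hθ_le : ∀ i j, θ i ≤ θ j + 2 * Real.pi) (hη : η ∈ weylAlcove n) :
    openSegment ℝ θ η ⊆ weylAlcove n := by
  rintro _ ⟨a, b, ha, hb, hab, rfl⟩
  refine ⟨(hθ.const_mul ha.le).add_strictMono (hη.1.const_mul hb), fun i j => ?_⟩
  calc a * θ i + b * η i < a * (θ j + 2 * Real.pi) + b * (η j + 2 * Real.pi) :=
        add_lt_add_of_le_of_lt (by gcongr; exact hθ_le i j) (by gcongr; exact hη.2 i j)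
    _ = a * θ j + b * η j + 2 * Real.pi := by linear_combination 2 * Real.pi * hab

theorem convex_weylAlcove : Convex ℝ (weylAlcove n) :=
  convex_iff_openSegment_subset.2 fun _ hθ _ hη =>
    openSegment_subset_weylAlcove hθ.1.monotone (fun i j => (hθ.2 i j).le) hη

instance : PreconnectedSpace (weylAlcove n) :=
  Subtype.preconnectedSpace convex_weylAlcove.isPreconnected

theorem phases_injective {θ : Fin n → ℝ} (hθ : θ ∈ weylAlcove n) :
    Function.Injective (phases θ) := by
  have hinj : Set.InjOn Circle.exp (Set.range θ) := by
    refine Circle.exp_injOn_of_forall_sub_mem_Ioo ?_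
    rintro _ ⟨i, rfl⟩ _ ⟨j, rfl⟩
    constructor <;> linarith [hθ.2 i j, hθ.2 j i]
  exact fun i j h => hθ.1.injective (hinj ⟨i, rfl⟩ ⟨j, rfl⟩ (Circle.coe_injective h))

/-- The angles of the `n`-th roots of unity. -/
noncomputable def rootAngles (n : ℕ) (k : Fin n) : ℝ := k * (2 * Real.pi / n)

theorem rootAngles_mem_weylAlcove : rootAngles n ∈ weylAlcove n := by
  refine ⟨fun i j hij => ?_, fun i j => ?_⟩
  · have hn : 0 < n := i.pos
    have hlt : (i : ℝ) < j := by exact_mod_cast hij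
    unfold rootAngles
    gcongr
  · have hn : (0 : ℝ) < n := by exact_mod_cast i.pos
    have hi : (i : ℝ) < n := by exact_mod_cast i.is_lt
    calc rootAngles n i < n * (2 * Real.pi / n) := by unfold rootAngles; gcongr
      _ = 2 * Real.pi := by field_simp
      _ ≤ rootAngles n j + 2 * Real.pi := le_add_of_nonneg_left (by unfold rootAngles; positivity)

instance : Nonempty (weylAlcove n) := ⟨⟨rootAngles n, rootAngles_mem_weylAlcove⟩⟩

theorem mem_closure_weylAlcove {θ : Fin n → ℝ} (hθ : Monotone θ)
    (hθ_le : ∀ i j, θ i ≤ θ j + 2 * Real.pi) : θ ∈ closure (weylAlcove n) :=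
  closure_mono (openSegment_subset_weylAlcove hθ hθ_le rootAngles_mem_weylAlcove) <|
    segment_subset_closure_openSegment (left_mem_segment ℝ θ _)

theorem exists_unitaryOfAngles_eq_of_mem_closure (X : unitaryGroup (Fin n) ℂ) :
    ∃ V, ∃ θ ∈ closure (weylAlcove n), unitaryOfAngles V θ = X := by
  obtain ⟨V, θ, rfl⟩ := exists_unitaryOfAngles_eq X
  let η (j : Fin n) : ℝ := toIcoMod Real.two_pi_pos 0 (θ j)
  have hη (j : Fin n) : 0 ≤ η j ∧ η j < 2 * Real.pi := by
    simpa using toIcoMod_mem_Ico' Real.two_pi_pos (θ j)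
  have hphases : phases η = phases θ := by
    ext j
    exact congrArg (fun z : Circle => (z : ℂ)) (Circle.periodic_exp.sub_zsmul_eq _)
  obtain ⟨W, hW⟩ := exists_unitaryOfAngles_comp_perm V η (Tuple.sort η)
  refine ⟨W, η ∘ Tuple.sort η, mem_closure_weylAlcove (Tuple.monotone_sort η) fun i j => ?_,
    hW.trans (unitaryOfAngles_congr hphases V)⟩
  have hi := (hη (Tuple.sort η i)).2
  have hj := (hη (Tuple.sort η j)).1
  simp only [Function.comp_apply]
  linarith

end Alcove

/-! ### Common eigenframes -/

section Frame

variable {n : ℕ}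

theorem add_const_mem_weylAlcove {θ : Fin n → ℝ} (hθ : θ ∈ weylAlcove n) (c : ℝ) :
    (fun j => θ j + c) ∈ weylAlcove n :=
  ⟨hθ.1.add_const c, fun i j => by linarith [hθ.2 i j]⟩

theorem phases_rootAngles_add [NeZero n] :
    phases (fun j => rootAngles n j + 2 * Real.pi / n) =
      phases (rootAngles n ∘ Equiv.addRight (1 : Fin n)) := by
  have hn : (n : ℝ) ≠ 0 := NeZero.ne _
  have hmod (m : ℕ) : Circle.exp ((m % n : ℕ) * (2 * Real.pi / n)) =
      Circle.exp (m * (2 * Real.pi / n)) := by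
    refine (Circle.exp_eq_exp.2 ⟨(m / n : ℕ), ?_⟩).symm
    have hm : (m : ℝ) = (m % n : ℕ) + n * (m / n : ℕ) := by
      exact_mod_cast (Nat.mod_add_div m n).symm
    rw [hm, Int.cast_natCast]
    field_simp
  ext j
  have hval : ((j + 1 : Fin n) : ℕ) = (j + 1) % n := by simp [Fin.val_add, Nat.add_mod]
  simp only [phases, Function.comp_apply, Equiv.coe_addRight, rootAngles, hval, hmod]
  push_cast
  ring_nf

theorem eq_univ_of_add_one_mem [NeZero n] {s : Set (Fin n)} (hs : s.Nonempty)
    (hadd : ∀ j ∈ s, j + 1 ∈ s) : s = Set.univ := by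
  obtain ⟨j₀, hj₀⟩ := hs
  have hmem (k : ℕ) : j₀ + Fin.ofNat n k ∈ s := by
    induction k with
    | zero => simpa using hj₀
    | succ k ih =>
      have hsucc : Fin.ofNat n (k + 1) = Fin.ofNat n k + 1 := by
        ext
        simp [Fin.val_add]
      rw [hsucc, ← add_assoc]
      exact hadd _ ih
  refine Set.eq_univ_of_forall fun j => ?_
  simpa using hmem (j - j₀ : Fin n)

theorem exists_unitaryOfAngles_rootAngles_eq [NeZero n] (V : unitaryGroup (Fin n) ℂ) :
    ∃ W, unitaryOfAngles W (rootAngles n) =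
      unitaryOfAngles V fun j => rootAngles n j + 2 * Real.pi / n := by
  let σ : Equiv.Perm (Fin n) := Equiv.addRight 1
  have hσ : (rootAngles n ∘ σ) ∘ ⇑σ⁻¹ = rootAngles n := by
    ext
    simp
  obtain ⟨W, hW⟩ := exists_unitaryOfAngles_comp_perm V (rootAngles n ∘ σ) σ⁻¹
  exact ⟨W, by rw [unitaryOfAngles_congr phases_rootAngles_add, ← hW, hσ]⟩

theorem phases_mem_spectrum {ψ : unitaryGroup (Fin n) ℂ → Matrix (Fin n) (Fin n) ℂ}
    (hψ : Continuous ψ) (hspec : ∀ X, spectrum ℂ (ψ X) ⊆ spectrum ℂ (X : Matrix (Fin n) (Fin n) ℂ))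
    (V : unitaryGroup (Fin n) ℂ) {θ : Fin n → ℝ} (hθ : θ ∈ weylAlcove n) (j : Fin n) :
    phases θ j ∈ spectrum ℂ (ψ (unitaryOfAngles V θ)) := by
  have : NeZero n := ⟨j.pos.ne'⟩
  obtain ⟨s, hcard, hs⟩ := exists_charpoly_roots_eq_map
    (A := fun p : unitaryGroup (Fin n) ℂ × weylAlcove n => ψ (unitaryOfAngles p.1 p.2))
    (z := fun p => phases p.2) (by fun_prop) (by fun_prop) (fun p => phases_injective p.2.2)
    (fun p => spectrum_unitaryOfAngles p.1 p.2 ▸ hspec _)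
  have hroots (W : unitaryGroup (Fin n) ℂ) {η : Fin n → ℝ} (hη : η ∈ weylAlcove n) :
      (ψ (unitaryOfAngles W η)).charpoly.roots = s.map (phases η) := hs (W, ⟨η, hη⟩)
  have hrotate : s.map (· + 1) = s := by
    obtain ⟨W, hW⟩ := exists_unitaryOfAngles_rootAngles_eq V
    have hV := hroots V (add_const_mem_weylAlcove rootAngles_mem_weylAlcove (2 * Real.pi / n))
    rw [← hW, hroots W rootAngles_mem_weylAlcove, phases_rootAngles_add] at hV
    refine Multiset.map_injective (phases_injective (rootAngles_mem_weylAlcove (n := n))) ?_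
    rw [Multiset.map_map, hV]
    rfl
  have huniv : {k | k ∈ s} = Set.univ := by
    refine eq_univ_of_add_one_mem ?_ fun k hk => ?_
    · exact Multiset.card_pos_iff_exists_mem.1 (hcard ▸ Fintype.card_pos)
    · rw [← hrotate]
      exact Multiset.mem_map_of_mem (· + 1) hk
  have hj : j ∈ s := Set.eq_univ_iff_forall.1 huniv j
  refine mem_spectrum_of_isRoot_charpoly (Polynomial.isRoot_of_mem_roots ?_)
  rw [hroots V hθ]
  exact Multiset.mem_map_of_mem _ hj

/-- A continuous, commutativity-preserving and spectrum-shrinking map on the unitary group. -/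
structure IsUnitaryPreserver (ψ : unitaryGroup (Fin n) ℂ → Matrix (Fin n) (Fin n) ℂ) : Prop where
  continuous : Continuous ψ
  commute : ∀ X Y, Commute X Y → Commute (ψ X) (ψ Y)
  spectrum_subset : ∀ X, spectrum ℂ (ψ X) ⊆ spectrum ℂ (X : Matrix (Fin n) (Fin n) ℂ)

/-- `S` diagonalises the images under `ψ` of the unitary matrices diagonalised by `V`, with the same
eigenvalues in the same order. -/
def IsFrame (ψ : unitaryGroup (Fin n) ℂ → Matrix (Fin n) (Fin n) ℂ) (V : unitaryGroup (Fin n) ℂ)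
    (S : (Matrix (Fin n) (Fin n) ℂ)ˣ) : Prop :=
  ∀ θ ∈ closure (weylAlcove n), ψ (unitaryOfAngles V θ) * S = S * diagonal (phases θ)

theorem IsUnitaryPreserver.exists_isFrame {ψ : unitaryGroup (Fin n) ℂ → Matrix (Fin n) (Fin n) ℂ}
    (hψ : IsUnitaryPreserver ψ) (V : unitaryGroup (Fin n) ℂ) : ∃ S, IsFrame ψ V S := by
  have hcont := hψ.continuous
  obtain ⟨S, hS⟩ := exists_mul_eq_mul_diagonal (phases_injective rootAngles_mem_weylAlcove)
    (phases_mem_spectrum hcont hψ.spectrum_subset V (rootAngles_mem_weylAlcove (n := n)))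
  have halcove (θ : weylAlcove n) :
      ψ (unitaryOfAngles V θ) * S = S * diagonal (phases (θ : Fin n → ℝ)) :=
    mul_eq_mul_diagonal_of_commute (p₀ := (⟨_, rootAngles_mem_weylAlcove⟩ : weylAlcove n))
      (A := fun θ : weylAlcove n => ψ (unitaryOfAngles V θ))
      (z := fun θ : weylAlcove n => phases (θ : Fin n → ℝ))
      (by fun_prop) (by fun_prop) (fun θ η => hψ.commute _ _ (commute_unitaryOfAngles V _ _))
      (fun θ => phases_injective θ.2)
      (fun θ => spectrum_unitaryOfAngles V θ ▸ hψ.spectrum_subset _) hS θ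
  have hclosed : IsClosed {θ | ψ (unitaryOfAngles V θ) * (S : Matrix (Fin n) (Fin n) ℂ) =
      S * diagonal (phases θ)} := isClosed_eq (by fun_prop) (by fun_prop)
  exact ⟨S, fun θ hθ => closure_minimal (fun η hη => halcove ⟨η, hη⟩) hclosed hθ⟩

end Frame

/-! ### Orthoadditive line maps -/

/-- A choice `r v` of spanning vectors of the images of the lines `ℂ v` under a continuous self-map
of a projective space that preserves the coordinate hyperplanes and maps the line of a sum of two
orthogonal vectors into the span of their images. Continuity is expressed by local lifts, as `r`
itself need not be continuous. -/
structure IsOrthoadditiveLineMap {ι : Type*} [Fintype ι] (r : (ι → ℂ) → ι → ℂ) : Prop where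
  ne_zero : ∀ {v}, v ≠ 0 → r v ≠ 0
  apply_eq_zero : ∀ {v i}, v ≠ 0 → v i = 0 → r v i = 0
  smul : ∀ {c : ℂ} {v}, c ≠ 0 → v ≠ 0 → ∃ a : ℂ, r (c • v) = a • r v
  add : ∀ {u w}, u ≠ 0 → w ≠ 0 → star u ⬝ᵥ w = 0 → ∃ a b : ℂ, r (u + w) = a • r u + b • r w
  exists_lift : ∀ {v}, v ≠ 0 →
    ∃ s : (ι → ℂ) → ι → ℂ, ContinuousAt s v ∧ s v ≠ 0 ∧ ∀ᶠ w in 𝓝 v, ∃ a : ℂ, s w = a • r w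

namespace IsOrthoadditiveLineMap

variable {ι : Type*} [Fintype ι] {r : (ι → ℂ) → ι → ℂ}

theorem eventually_apply_ne_zero (hr : IsOrthoadditiveLineMap r) {v : ι → ℂ} (hv : v ≠ 0) {i : ι}
    (hi : r v i ≠ 0) : ∀ᶠ w in 𝓝 v, r w i ≠ 0 := by
  obtain ⟨s, hs, hsv, hlift⟩ := hr.exists_lift hv
  obtain ⟨a, ha⟩ := hlift.self_of_nhds
  have hsi : s v i ≠ 0 := by
    rw [ha] at hsv ⊢
    exact mul_ne_zero (smul_ne_zero_iff.1 hsv).1 hi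
  filter_upwards [hlift, (continuousAt_pi.1 hs i).eventually_ne hsi] with w ⟨b, hb⟩ hw
  rw [hb] at hw
  exact right_ne_zero_of_mul hw

theorem isClosed_apply_eq_zero (hr : IsOrthoadditiveLineMap r) {X : Type*} [TopologicalSpace X]
    {γ : X → ι → ℂ} (hγ : Continuous γ) (hγ_ne : ∀ x, γ x ≠ 0) (i : ι) :
    IsClosed {x | r (γ x) i = 0} := by
  refine isOpen_compl_iff.1 (isOpen_iff_mem_nhds.2 fun x hx => ?_)
  exact hγ.continuousAt.eventually (hr.eventually_apply_ne_zero (hγ_ne x) hx)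

theorem continuousAt_apply_div_apply (hr : IsOrthoadditiveLineMap r) {v : ι → ℂ} (hv : v ≠ 0)
    {i : ι} (hi : r v i ≠ 0) (j : ι) : ContinuousAt (fun w => r w j / r w i) v := by
  obtain ⟨s, hs, hsv, hlift⟩ := hr.exists_lift hv
  obtain ⟨a, ha⟩ := hlift.self_of_nhds
  have hsi : s v i ≠ 0 := by
    rw [ha] at hsv ⊢
    exact mul_ne_zero (smul_ne_zero_iff.1 hsv).1 hi
  have hratio : ContinuousAt (fun w => s w j / s w i) v :=
    (continuousAt_pi.1 hs j).div (continuousAt_pi.1 hs i) hsi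
  refine hratio.congr ?_
  filter_upwards [hlift, (continuousAt_pi.1 hs i).eventually_ne hsi] with w ⟨b, hb⟩ hw
  rw [hb] at hw ⊢
  exact mul_div_mul_left _ _ (left_ne_zero_of_mul hw)

theorem exists_forall_apply_eq_mul (hr : IsOrthoadditiveLineMap r) {p v : ι → ℂ} (hp : p ≠ 0)
    (h : ∀ l, p l ≠ v l → p l = 0) : ∃ a, ∀ l, p l = v l → r v l = a * r p l := by
  obtain rfl | hne := eq_or_ne p v
  · exact ⟨1, fun l _ => (one_mul _).symm⟩
  have horth : star p ⬝ᵥ (v - p) = 0 := Finset.sum_eq_zero fun l _ => by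
    by_cases hl : p l = v l
    · simp [hl]
    · simp [h l hl]
  obtain ⟨a, b, hab⟩ := hr.add hp (sub_ne_zero.2 hne.symm) horth
  refine ⟨a, fun l hl => ?_⟩
  have hvan : r (v - p) l = 0 := hr.apply_eq_zero (sub_ne_zero.2 hne.symm) (by simp [hl])
  rw [← add_sub_cancel p v, hab]
  simp [hvan]

theorem exists_ne_zero_apply_ne_zero (hr : IsOrthoadditiveLineMap r) {v : ι → ℂ} (hv : v ≠ 0) :
    ∃ i, v i ≠ 0 ∧ r v i ≠ 0 := by
  obtain ⟨i, hi⟩ := Function.ne_iff.1 (hr.ne_zero hv)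
  exact ⟨i, fun h => hi (hr.apply_eq_zero hv h), hi⟩

end IsOrthoadditiveLineMap

section PairVector

variable {ι : Type*} [DecidableEq ι] {i j l : ι}

/-- The vector `e_i + x e_j`, for `i ≠ j`, which spans a line of slope `x`. -/
def pairVector (i j : ι) (x : ℂ) : ι → ℂ := Function.update (Pi.single i 1) j x

theorem pairVector_apply_left (hij : i ≠ j) (x : ℂ) : pairVector i j x i = 1 := by
  simp [pairVector, hij]

theorem pairVector_apply_right (i j : ι) (x : ℂ) : pairVector i j x j = x := by
  simp [pairVector]

theorem pairVector_apply_of_ne (hi : l ≠ i) (hj : l ≠ j) (x : ℂ) : pairVector i j x l = 0 := by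
  simp [pairVector, hi, hj]

theorem pairVector_zero (hij : i ≠ j) : pairVector i j 0 = Pi.single i 1 := by
  simp [pairVector, hij.symm]

theorem pairVector_ne_zero (hij : i ≠ j) (x : ℂ) : pairVector i j x ≠ 0 := fun h =>
  one_ne_zero ((pairVector_apply_left hij x).symm.trans (congrFun h i))

@[fun_prop]
theorem continuous_pairVector (i j : ι) : Continuous (pairVector i j) :=
  continuous_const.update j continuous_id

end PairVector

namespace IsOrthoadditiveLineMap

variable {ι : Type*} [Fintype ι] [DecidableEq ι] {r : (ι → ℂ) → ι → ℂ} {i j l : ι}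

theorem exists_apply_eq_mul_pairVector (hr : IsOrthoadditiveLineMap r) (hij : i ≠ j) {v : ι → ℂ}
    (hi : v i ≠ 0) : ∃ a, r v i = a * r (pairVector i j (v j / v i)) i ∧
      r v j = a * r (pairVector i j (v j / v i)) j := by
  set p := pairVector i j (v j / v i) with hp
  have hp_ne : p ≠ 0 := pairVector_ne_zero hij _
  have hpi : (v i • p) i = v i := by simp [hp, pairVector_apply_left hij]
  have hpj : (v i • p) j = v j := by simp [hp, pairVector_apply_right, hi, mul_div_cancel₀]
  obtain ⟨a, ha⟩ := hr.smul hi hp_ne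
  obtain ⟨b, hb⟩ := hr.exists_forall_apply_eq_mul (v := v) (smul_ne_zero hi hp_ne) fun l hl => by
    have hli : l ≠ i := by rintro rfl; exact hl hpi
    have hlj : l ≠ j := by rintro rfl; exact hl hpj
    simp [hp, pairVector_apply_of_ne hli hlj]
  refine ⟨b * a, ?_, ?_⟩
  · rw [hb i hpi, ha, Pi.smul_apply, smul_eq_mul, mul_assoc]
  · rw [hb j hpj, ha, Pi.smul_apply, smul_eq_mul, mul_assoc]

theorem apply_eq_zero_of_pairVector (hr : IsOrthoadditiveLineMap r) (hij : i ≠ j) (hil : i ≠ l)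
    {v : ι → ℂ} (hi : v i ≠ 0) (hj : r (pairVector i j (v j / v i)) i = 0)
    (hl : r (pairVector i l (v l / v i)) i ≠ 0) : r v i = 0 ∧ r v l = 0 := by
  obtain ⟨a, hai, -⟩ := hr.exists_apply_eq_mul_pairVector hij hi
  obtain ⟨b, hbi, hbl⟩ := hr.exists_apply_eq_mul_pairVector hil hi
  have hvi : r v i = 0 := by rw [hai, hj, mul_zero]
  have hb : b = 0 := (mul_eq_zero.1 (hbi.symm.trans hvi)).resolve_right hl
  exact ⟨hvi, by rw [hbl, hb, zero_mul]⟩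

theorem apply_update_eq_zero_of_mem_closure (hr : IsOrthoadditiveLineMap r) (hij : i ≠ j)
    (hil : i ≠ l) (hjl : j ≠ l) {x y : ℂ} (hx : r (pairVector i j x) i = 0)
    (hy : y ∈ closure {y | r (pairVector i l y) i = 0}ᶜ) :
    r (Function.update (pairVector i j x) l y) i = 0 ∧
      r (Function.update (pairVector i j x) l y) l = 0 := by
  let γ (y : ℂ) : ι → ℂ := Function.update (pairVector i j x) l y
  have hγ_cont : Continuous γ := continuous_const.update l continuous_id
  have hγi (y : ℂ) : γ y i = 1 := by simp [γ, hil, pairVector_apply_left hij]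
  have hγ (y : ℂ) : γ y ≠ 0 := fun h => one_ne_zero ((hγi y).symm.trans (congrFun h i))
  refine closure_minimal (t := {y | r (γ y) i = 0} ∩ {y | r (γ y) l = 0}) (fun y hy => ?_)
    ((hr.isClosed_apply_eq_zero hγ_cont hγ i).inter (hr.isClosed_apply_eq_zero hγ_cont hγ l)) hy
  refine hr.apply_eq_zero_of_pairVector hij hil ((hγi y).trans_ne one_ne_zero) ?_ ?_
  · rw [hγi, div_one]
    simpa [γ, hjl, pairVector_apply_right] using hx
  · rw [hγi, div_one]
    simpa [γ] using hy

theorem apply_single_ne_zero (hr : IsOrthoadditiveLineMap r) (i : ι) :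
    r (Pi.single i 1) i ≠ 0 := by
  obtain ⟨k, hk, hrk⟩ := hr.exists_ne_zero_apply_ne_zero
    (Pi.single_ne_zero_iff.2 one_ne_zero : (Pi.single i 1 : ι → ℂ) ≠ 0)
  obtain rfl : k = i := by_contra fun h => hk (Pi.single_eq_of_ne h 1)
  exact hrk

theorem exists_mem_frontier (hr : IsOrthoadditiveLineMap r) (hij : i ≠ j) {x : ℂ}
    (hx : r (pairVector i j x) i = 0) :
    ∃ y, r (pairVector i j y) i = 0 ∧ y ∈ closure {y | r (pairVector i j y) i = 0}ᶜ := by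
  have hclosed : IsClosed {y | r (pairVector i j y) i = 0} :=
    hr.isClosed_apply_eq_zero (by fun_prop) (pairVector_ne_zero hij) i
  have hne_univ : {y | r (pairVector i j y) i = 0} ≠ Set.univ := fun h => by
    have h₀ : r (pairVector i j 0) i = 0 := Set.eq_univ_iff_forall.1 h 0
    rw [pairVector_zero hij] at h₀
    exact hr.apply_single_ne_zero i h₀
  obtain ⟨y, hy⟩ := nonempty_frontier_iff.2 ⟨⟨x, hx⟩, hne_univ⟩
  rw [frontier_eq_closure_inter_closure, hclosed.closure_eq] at hy
  exact ⟨y, hy⟩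

theorem exists_pairVector_apply_eq_zero (hr : IsOrthoadditiveLineMap r) (hij : i ≠ j) (hil : i ≠ l)
    (hjl : j ≠ l) {x : ℂ} (hx : r (pairVector i j x) i = 0) :
    ∃ y, r (pairVector i l y) i = 0 := by
  by_contra! h
  have hx_ne : x ≠ 0 := by
    rintro rfl
    exact hr.apply_single_ne_zero i (pairVector_zero hij ▸ hx)
  let γ (s : ℂ) : ι → ℂ := Function.update (pairVector l j s) i (s / x)
  have hγ_cont : Continuous γ := by fun_prop
  have hγl (s : ℂ) : γ s l = 1 := by simp [γ, hil.symm, pairVector_apply_left hjl.symm]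
  have hγ (s : ℂ) : γ s ≠ 0 := fun h => one_ne_zero ((hγl s).symm.trans (congrFun h l))
  have hvan (s : ℂ) (hs : s ≠ 0) : r (γ s) l = 0 := by
    have hγi : γ s i = s / x := by simp [γ]
    have hslope : γ s j / γ s i = x := by
      rw [hγi]
      simp [γ, hij.symm, pairVector_apply_right, hs]
    refine (hr.apply_eq_zero_of_pairVector hij hil ?_ ?_ (h _)).2
    · exact hγi.trans_ne (div_ne_zero hs hx_ne)
    · rwa [hslope]
  have hvan₀ : r (γ 0) l = 0 :=
    closure_minimal (t := {s | r (γ s) l = 0}) hvan (hr.isClosed_apply_eq_zero hγ_cont hγ l)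
      ((dense_compl_singleton (0 : ℂ)).closure_eq ▸ Set.mem_univ 0)
  have hγ₀ : γ 0 = Pi.single l 1 := by simp [γ, pairVector_zero hjl.symm, hil]
  exact hr.apply_single_ne_zero l (hγ₀ ▸ hvan₀)

-- On the boundary of the zero sets of both slopes the image would have to vanish entirely.
theorem pairVector_apply_left_ne_zero (hr : IsOrthoadditiveLineMap r) (hij : i ≠ j) (hil : i ≠ l)
    (hjl : j ≠ l) (x : ℂ) : r (pairVector i j x) i ≠ 0 := by
  intro hx
  obtain ⟨y, hy⟩ := hr.exists_pairVector_apply_eq_zero hij hil hjl hx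
  obtain ⟨x₁, hx₁, hx₁_cl⟩ := hr.exists_mem_frontier hij hx
  obtain ⟨y₁, hy₁, hy₁_cl⟩ := hr.exists_mem_frontier hil hy
  obtain ⟨hvi, hvl⟩ := hr.apply_update_eq_zero_of_mem_closure hij hil hjl hx₁ hy₁_cl
  obtain ⟨-, hvj⟩ := hr.apply_update_eq_zero_of_mem_closure hil hij hjl.symm hy₁ hx₁_cl
  have hswap : Function.update (pairVector i l y₁) j x₁ =
      Function.update (pairVector i j x₁) l y₁ := Function.update_comm hjl.symm ..
  rw [hswap] at hvj
  have hv : Function.update (pairVector i j x₁) l y₁ ≠ 0 := fun h => by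
    simpa [hil, pairVector_apply_left hij] using congrFun h i
  obtain ⟨k, hk, hrk⟩ := hr.exists_ne_zero_apply_ne_zero hv
  have hki : k ≠ i := by rintro rfl; exact hrk hvi
  have hkj : k ≠ j := by rintro rfl; exact hrk hvj
  have hkl : k ≠ l := by rintro rfl; exact hrk hvl
  exact hk (by simp [hkl, pairVector_apply_of_ne hki hkj])

end IsOrthoadditiveLineMap

theorem exists_ne_ne_of_three_le_card {ι : Type*} [Fintype ι] (hι : 3 ≤ Fintype.card ι) (i j : ι) :
    ∃ l, i ≠ l ∧ j ≠ l := by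
  classical
  have hlt : ({i, j} : Finset ι).card < (Finset.univ : Finset ι).card :=
    Finset.card_le_two.trans_lt hι
  obtain ⟨l, -, hl⟩ := Finset.exists_mem_notMem_of_card_lt_card hlt
  simp only [Finset.mem_insert, Finset.mem_singleton, not_or] at hl
  exact ⟨l, Ne.symm hl.1, Ne.symm hl.2⟩

theorem eq_of_ne_of_three_le_card {ι α : Type*} [Fintype ι] (hι : 3 ≤ Fintype.card ι)
    {c : ι → ι → α} (hright : ∀ {i j l}, i ≠ j → i ≠ l → j ≠ l → c i l = c i j)
    (hleft : ∀ {i j l}, i ≠ j → i ≠ l → j ≠ l → c i l = c j l) {i₀ j₀ i j : ι} (h₀ : i₀ ≠ j₀)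
    (hij : i ≠ j) : c i j = c i₀ j₀ := by
  have heq_of_ne {i j : ι} (hij : i ≠ j) (hi : i ≠ j₀) : c i j = c i₀ j₀ := by
    have hij₀ : c i j = c i j₀ := by
      obtain rfl | hj := eq_or_ne j j₀
      · rfl
      · exact hright hi hij hj.symm
    obtain rfl | hii₀ := eq_or_ne i i₀
    · exact hij₀
    · exact hij₀.trans (hleft hii₀ hi h₀)
  obtain ⟨l, hil, hjl⟩ := exists_ne_ne_of_three_le_card hι i j
  obtain rfl | hi := eq_or_ne i j₀
  · exact (hleft hil hij hjl.symm).trans (heq_of_ne hjl.symm hil.symm)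
  · exact heq_of_ne hij hi

/-- The map on slopes `v j / v i` of lines `ℂ v` induced by the line map `r`. -/
noncomputable def slopeMap {ι : Type*} [DecidableEq ι] (r : (ι → ℂ) → ι → ℂ) (i j : ι)
    (x : ℂ) : ℂ :=
  r (pairVector i j x) j / r (pairVector i j x) i

namespace IsOrthoadditiveLineMap

variable {ι : Type*} [Fintype ι] {r : (ι → ℂ) → ι → ℂ} {i j l : ι}

theorem apply_eq_apply_mul_slopeMap [DecidableEq ι] (hr : IsOrthoadditiveLineMap r)
    (hι : 3 ≤ Fintype.card ι) (hij : i ≠ j) {v : ι → ℂ} (hi : v i ≠ 0) :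
    r v j = r v i * slopeMap r i j (v j / v i) := by
  obtain ⟨l, hil, hjl⟩ := exists_ne_ne_of_three_le_card hι i j
  obtain ⟨a, hai, haj⟩ := hr.exists_apply_eq_mul_pairVector hij hi
  have hne := hr.pairVector_apply_left_ne_zero hij hil hjl (v j / v i)
  rw [hai, haj, slopeMap]
  field_simp

theorem apply_ne_zero (hr : IsOrthoadditiveLineMap r) (hι : 3 ≤ Fintype.card ι) {v : ι → ℂ}
    (hi : v i ≠ 0) : r v i ≠ 0 := fun h => by
  classical
  have hv : v ≠ 0 := fun hv => hi (congrFun hv i)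
  refine hr.ne_zero hv (funext fun j => ?_)
  obtain rfl | hij := eq_or_ne i j
  · exact h
  · rw [hr.apply_eq_apply_mul_slopeMap hι hij hi, h, zero_mul, Pi.zero_apply]

variable [DecidableEq ι]

theorem slopeMap_zero (hr : IsOrthoadditiveLineMap r) (hij : i ≠ j) : slopeMap r i j 0 = 0 := by
  rw [slopeMap, hr.apply_eq_zero (pairVector_ne_zero hij 0) (pairVector_apply_right i j 0),
    zero_div]

theorem slopeMap_mul (hr : IsOrthoadditiveLineMap r) (hι : 3 ≤ Fintype.card ι) (hij : i ≠ j)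
    (hil : i ≠ l) (hjl : j ≠ l) (x t : ℂ) :
    slopeMap r i l (x * t) = slopeMap r i j x * slopeMap r j l t := by
  obtain rfl | hx := eq_or_ne x 0
  · rw [zero_mul, hr.slopeMap_zero hil, hr.slopeMap_zero hij, zero_mul]
  let v : ι → ℂ := Function.update (pairVector i j x) l (x * t)
  have hvi : v i = 1 := by simp [v, hil, pairVector_apply_left hij]
  have hvj : v j = x := by simp [v, hjl, pairVector_apply_right]
  have hvl : v l = x * t := by simp [v]
  have hvi_ne : v i ≠ 0 := hvi.trans_ne one_ne_zero
  have hratio_j := hr.apply_eq_apply_mul_slopeMap hι hij hvi_ne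
  have hratio_l := hr.apply_eq_apply_mul_slopeMap hι hil hvi_ne
  have hratio_jl := hr.apply_eq_apply_mul_slopeMap hι hjl (hvj.trans_ne hx)
  rw [hvi, hvj, div_one] at hratio_j
  rw [hvi, hvl, div_one] at hratio_l
  rw [hvj, hvl, mul_div_cancel_left₀ _ hx, hratio_j, mul_assoc] at hratio_jl
  exact mul_left_cancel₀ (hr.apply_ne_zero hι hvi_ne) (hratio_l.symm.trans hratio_jl)

theorem continuous_slopeMap (hr : IsOrthoadditiveLineMap r) (hι : 3 ≤ Fintype.card ι)
    (hij : i ≠ j) : Continuous (slopeMap r i j) := by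
  obtain ⟨l, hil, hjl⟩ := exists_ne_ne_of_three_le_card hι i j
  refine continuous_iff_continuousAt.2 fun x => ?_
  have hratio := hr.continuousAt_apply_div_apply (pairVector_ne_zero hij x)
    (hr.pairVector_apply_left_ne_zero hij hil hjl x) j
  exact hratio.comp (f := pairVector i j) (continuous_pairVector i j).continuousAt

theorem exists_slopeMap_eq (hr : IsOrthoadditiveLineMap r) (hι : 3 ≤ Fintype.card ι) :
    ∃ m : ι → ℂ, (∀ i, m i ≠ 0) ∧ ∃ c : ℂ → ℂ, c 1 = 1 ∧
      ∀ i j, i ≠ j → ∀ x, slopeMap r i j x = m j / m i * c x := by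
  have hne (i : ι) : r 1 i ≠ 0 := hr.apply_ne_zero hι one_ne_zero
  let c (i j : ι) (x : ℂ) : ℂ := r 1 i / r 1 j * slopeMap r i j x
  have hc_one {i j : ι} (hij : i ≠ j) : c i j 1 = 1 := by
    have hratio := hr.apply_eq_apply_mul_slopeMap hι hij (v := 1) one_ne_zero
    simp only [Pi.one_apply, div_one] at hratio
    have := hne i
    have := hne j
    simp only [c]
    field_simp
    exact hratio.symm
  have hc_mul {i j l : ι} (hij : i ≠ j) (hil : i ≠ l) (hjl : j ≠ l) (x t : ℂ) :
      c i l (x * t) = c i j x * c j l t := by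
    have := hne j
    simp only [c, hr.slopeMap_mul hι hij hil hjl]
    field_simp
  have hc_right {i j l : ι} (hij : i ≠ j) (hil : i ≠ l) (hjl : j ≠ l) : c i l = c i j :=
    funext fun x => by simpa [hc_one hjl] using hc_mul hij hil hjl x 1
  have hc_left {i j l : ι} (hij : i ≠ j) (hil : i ≠ l) (hjl : j ≠ l) : c i l = c j l :=
    funext fun x => by simpa [hc_one hij] using hc_mul hij hil hjl 1 x
  have : Nontrivial ι := Fintype.one_lt_card_iff_nontrivial.1 (by lia)
  obtain ⟨i₀, j₀, h₀⟩ := exists_pair_ne ι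
  refine ⟨r 1, hne, c i₀ j₀, hc_one h₀, fun i j hij x => ?_⟩
  have := hne i
  have := hne j
  rw [← eq_of_ne_of_three_le_card hι hc_right hc_left h₀ hij]
  simp only [c]
  field_simp

end IsOrthoadditiveLineMap

theorem IsOrthoadditiveLineMap.exists_monoidWithZeroHom {ι : Type*} [Fintype ι]
    {r : (ι → ℂ) → ι → ℂ} (hr : IsOrthoadditiveLineMap r) (hι : 3 ≤ Fintype.card ι) :
    ∃ m : ι → ℂ, (∀ i, m i ≠ 0) ∧ ∃ c : ℂ →*₀ ℂ, Continuous c ∧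
      ∀ v ≠ 0, ∃ a : ℂ, a ≠ 0 ∧ ∀ j, r v j = a * (m j * c (v j)) := by
  classical
  obtain ⟨m, hm, c, hc_one, hslope⟩ := hr.exists_slopeMap_eq hι
  obtain ⟨i, j, l, hij, hil, hjl⟩ := Fintype.two_lt_card_iff.1 hι
  have hmi := hm i
  have hmj := hm j
  have hml := hm l
  have hc_zero : c 0 = 0 := by simpa [hslope i j hij, hm] using hr.slopeMap_zero hij
  have hc_mul (x t : ℂ) : c (x * t) = c x * c t := by
    have h := hr.slopeMap_mul hι hij hil hjl x t
    rw [hslope i l hil, hslope i j hij, hslope j l hjl] at h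
    field_simp at h
    exact h
  have hc_cont : Continuous c := by
    have hc : c = fun x => m i / m j * slopeMap r i j x := by
      ext x
      rw [hslope i j hij]
      field_simp
    rw [hc]
    exact continuous_const.mul (hr.continuous_slopeMap hι hij)
  let c' : ℂ →*₀ ℂ :=
    { toFun := c, map_zero' := hc_zero, map_one' := hc_one, map_mul' := hc_mul }
  refine ⟨m, hm, c', hc_cont, fun v hv => ?_⟩
  obtain ⟨k, hk⟩ := Function.ne_iff.1 hv
  have hck : c' (v k) ≠ 0 := (map_ne_zero c').2 hk
  have hmk := hm k
  refine ⟨r v k / (m k * c' (v k)), div_ne_zero (hr.apply_ne_zero hι hk) (mul_ne_zero hmk hck),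
    fun j => ?_⟩
  obtain rfl | hkj := eq_or_ne k j
  · field_simp
  · rw [hr.apply_eq_apply_mul_slopeMap hι hkj hk, hslope k j hkj,
      show c (v j / v k) = c' (v j) / c' (v k) from map_div₀ c' _ _]
    field_simp

-- With `g p = c (1 + p) - c p`, the orthogonal vectors `(s, 1, 0)` and `(s p, -s² p, 1)` give
-- `g p = g (-s² p)`, and letting `s → 0` gives `g p = g 0 = 1`.
theorem map_one_add_of_orthoadditive {ι : Type*} [Fintype ι] (hι : 3 ≤ Fintype.card ι)
    {c : ℂ →*₀ ℂ} (hc : Continuous c)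
    (hadd : ∀ u w : ι → ℂ, u ≠ 0 → w ≠ 0 → star u ⬝ᵥ w = 0 →
      ∃ a b : ℂ, c ∘ (u + w) = a • c ∘ u + b • c ∘ w) (p : ℂ) : c (1 + p) = 1 + c p := by
  classical
  obtain ⟨i, j, l, hij, hil, hjl⟩ := Fintype.two_lt_card_iff.1 hι
  let g (p : ℂ) : ℂ := c (1 + p) - c p
  have hg (s : ℝ) (hs : s ≠ 0) : g (-s ^ 2 * p) = g p := by
    let u : ι → ℂ := Pi.single i (s : ℂ) + Pi.single j 1
    let w : ι → ℂ := Pi.single i (s * p) + Pi.single j (-s ^ 2 * p) + Pi.single l 1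
    have hu : u i = s ∧ u j = 1 ∧ u l = 0 := by simp [u, hij, hij.symm, hil.symm, hjl.symm]
    have hw : w i = s * p ∧ w j = -s ^ 2 * p ∧ w l = 1 := by
      simp [w, hij, hil, hjl, hij.symm, hil.symm, hjl.symm]
    have horth : star u ⬝ᵥ w = 0 := by
      simp only [u, star_add, Pi.star_single, add_dotProduct, single_dotProduct, hw,
        Complex.star_def, Complex.conj_ofReal, map_one]
      ring
    obtain ⟨a, b, hab⟩ := hadd u w (fun h => by simp [h] at hu) (fun h => by simp [h] at hw) horth
    have hi : c (s * (1 + p)) = a * c s + b * c (s * p) := by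
      simpa [hu, hw, mul_add] using congrFun hab i
    have hj : c (1 + -s ^ 2 * p) = a + b * c (-s ^ 2 * p) := by
      simpa [hu, hw] using congrFun hab j
    have hb : b = 1 := by simpa [hu, hw, eq_comm] using congrFun hab l
    have hcs : c s ≠ 0 := (map_ne_zero c).2 (Complex.ofReal_ne_zero.2 hs)
    have ha : g p = a := mul_left_cancel₀ hcs <| by
      rw [map_mul, map_mul] at hi
      simp only [g]
      linear_combination hi + c s * c p * hb
    rw [ha]
    simp only [g]
    linear_combination hj + c (-s ^ 2 * p) * hb
  have hcont : Continuous fun s : ℝ => g (-s ^ 2 * p) := by fun_prop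
  have hconst : (fun s : ℝ => g (-s ^ 2 * p)) = fun _ => g p :=
    hcont.ext_on (dense_compl_singleton 0) continuous_const hg
  have hg_zero : g 0 = g p := by simpa using congrFun hconst 0
  have hg_one : g p = 1 := by rw [← hg_zero]; simp [g]
  linear_combination hg_one

theorem map_add_of_orthoadditive {ι : Type*} [Fintype ι] (hι : 3 ≤ Fintype.card ι)
    {c : ℂ →*₀ ℂ} (hc : Continuous c)
    (hadd : ∀ u w : ι → ℂ, u ≠ 0 → w ≠ 0 → star u ⬝ᵥ w = 0 →
      ∃ a b : ℂ, c ∘ (u + w) = a • c ∘ u + b • c ∘ w) (x y : ℂ) : c (x + y) = c x + c y := by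
  obtain rfl | hx := eq_or_ne x 0
  · simp
  calc c (x + y) = c (x * (1 + y / x)) := by congr 1; field_simp
    _ = c x * (1 + c (y / x)) := by rw [map_mul, map_one_add_of_orthoadditive hι hc hadd]
    _ = c x + c y := by rw [mul_add, mul_one, ← map_mul, mul_div_cancel₀ _ hx]

open scoped ComplexOrder in
theorem add_ne_zero_of_orthogonal {ι : Type*} [Fintype ι] {u w : ι → ℂ} (hu : u ≠ 0)
    (huw : star u ⬝ᵥ w = 0) : u + w ≠ 0 := fun h => hu <| by
  rw [← dotProduct_star_self_eq_zero, ← add_zero (star u ⬝ᵥ u), ← huw, ← dotProduct_add, h,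
    dotProduct_zero, huw]

theorem IsOrthoadditiveLineMap.exists_eq_smul_mul_or_star {ι : Type*} [Fintype ι]
    {r : (ι → ℂ) → ι → ℂ} (hr : IsOrthoadditiveLineMap r) (hι : 3 ≤ Fintype.card ι) :
    ∃ m : ι → ℂ, (∀ i, m i ≠ 0) ∧
      ((∀ v ≠ 0, ∃ a : ℂ, r v = a • (m * v)) ∨ ∀ v ≠ 0, ∃ a : ℂ, r v = a • (m * star v)) := by
  classical
  obtain ⟨m, hm, c, hc_cont, hrc⟩ := hr.exists_monoidWithZeroHom hι
  have hadd (u w : ι → ℂ) (hu : u ≠ 0) (hw : w ≠ 0) (huw : star u ⬝ᵥ w = 0) :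
      ∃ a b : ℂ, c ∘ (u + w) = a • c ∘ u + b • c ∘ w := by
    obtain ⟨a, b, hab⟩ := hr.add hu hw huw
    obtain ⟨x, -, hx⟩ := hrc u hu
    obtain ⟨y, -, hy⟩ := hrc w hw
    obtain ⟨z, hz, hz'⟩ := hrc (u + w) (add_ne_zero_of_orthogonal hu huw)
    refine ⟨a * x / z, b * y / z, funext fun j => ?_⟩
    have hj := congrFun hab j
    have hmj := hm j
    simp only [Pi.add_apply, Pi.smul_apply, smul_eq_mul, Function.comp_apply, hx, hy, hz'] at hj ⊢
    field_simp
    refine mul_left_cancel₀ hmj ?_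
    linear_combination hj
  let f : ℂ →+* ℂ := { c with map_add' := map_add_of_orthoadditive hι hc_cont hadd }
  have hrf (v : ι → ℂ) (hv : v ≠ 0) : ∃ a : ℂ, r v = a • (m * f ∘ v) := by
    obtain ⟨a, -, ha⟩ := hrc v hv
    exact ⟨a, funext ha⟩
  refine ⟨m, hm, ?_⟩
  obtain hf | hf := Complex.ringHom_eq_id_or_conj_of_continuous (f := f) hc_cont <;>
    rw [hf] at hrf
  · exact Or.inl hrf
  · exact Or.inr hrf

/-! ### Reflections and their axes -/

section Householder

variable {ι : Type*} [Fintype ι]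

theorem isStarProjection_smul_vecMulVec_star (v : ι → ℂ) :
    IsStarProjection ((star v ⬝ᵥ v)⁻¹ • vecMulVec v (star v)) := by
  constructor
  · rw [IsIdempotentElem, smul_mul_smul_comm, vecMulVec_mul_vecMulVec, vecMulVec_smul, smul_smul]
    obtain h | h := eq_or_ne (star v ⬝ᵥ v) 0
    · simp [h]
    · rw [inv_mul_cancel_right₀ h]
  · rw [IsSelfAdjoint, star_smul, star_inv₀, ← star_dotProduct, star_eq_conjTranspose,
      conjTranspose_vecMulVec, star_star]

variable [DecidableEq ι]

/-- The reflection in the hyperplane orthogonal to `v`; the identity if `v = 0`. -/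
noncomputable def householder (v : ι → ℂ) : unitaryGroup ι ℂ :=
  -⟨2 * ((star v ⬝ᵥ v)⁻¹ • vecMulVec v (star v)) - 1,
    (isStarProjection_smul_vecMulVec_star v).two_mul_sub_one_mem_unitary⟩

theorem coe_householder (v : ι → ℂ) : (householder v : Matrix ι ι ℂ) =
    1 - 2 * ((star v ⬝ᵥ v)⁻¹ • vecMulVec v (star v)) :=
  neg_sub _ _

theorem householder_smul {c : ℂ} (hc : c ≠ 0) (v : ι → ℂ) :
    householder (c • v) = householder v := by
  have hc' : star c ≠ 0 := star_ne_zero.2 hc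
  refine Subtype.ext ?_
  simp only [coe_householder, star_smul, smul_dotProduct, dotProduct_smul, vecMulVec_smul,
    smul_vecMulVec, smul_smul, smul_eq_mul]
  congr 3
  field_simp

open scoped ComplexOrder in
theorem continuousAt_householder {v : ι → ℂ} (hv : v ≠ 0) : ContinuousAt householder v := by
  have hne : star v ⬝ᵥ v ≠ 0 := mt dotProduct_star_self_eq_zero.1 hv
  refine Topology.IsInducing.subtypeVal.continuousAt_iff.2 ?_
  change ContinuousAt (fun w => (householder w : Matrix ι ι ℂ)) v
  simp only [coe_householder]
  fun_prop (disch := assumption)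

theorem star_col_dotProduct_col (V : unitaryGroup ι ℂ) (i j : ι) :
    star ((V : Matrix ι ι ℂ).col i) ⬝ᵥ (V : Matrix ι ι ℂ).col j = (1 : Matrix ι ι ℂ) i j :=
  congrFun₂ (Unitary.coe_star_mul_self V) i j

theorem exists_eq_smul_col {u : ι → ι → ℂ} {s : Set ι} (hu : ∀ i ∈ s, u i ≠ 0)
    (horth : s.Pairwise fun i j => star (u i) ⬝ᵥ u j = 0) :
    ∃ V : unitaryGroup ι ℂ, ∀ i ∈ s, ∃ c : ℂ, u i = c • (V : Matrix ι ι ℂ).col i := by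
  let x (i : ι) : EuclideanSpace ℂ ι := WithLp.toLp 2 (u i)
  have hx (i : ι) (hi : i ∈ s) : (‖x i‖ : ℂ) ≠ 0 := by
    simpa [x] using hu i hi
  let w (i : ι) : EuclideanSpace ℂ ι := (‖x i‖ : ℂ)⁻¹ • x i
  have hw : Orthonormal ℂ (s.domRestrict w) := by
    refine ⟨fun i => ?_, fun i j hij => ?_⟩
    · have := hx i i.2
      simp_all [w, norm_smul]
    · have hinner : inner ℂ (x i) (x j) = 0 := by
        rw [EuclideanSpace.inner_eq_star_dotProduct, dotProduct_comm]
        exact horth i.2 j.2 (Subtype.coe_ne_coe.2 hij)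
      simp [w, inner_smul_left, inner_smul_right, hinner]
  obtain ⟨b, hb⟩ := hw.exists_orthonormalBasis_extension_of_card_eq (by simp)
  let V : Matrix ι ι ℂ := Matrix.of fun l i => b i l
  have hV : V ∈ unitaryGroup ι ℂ := by
    rw [mem_unitaryGroup_iff']
    ext i j
    have := orthonormal_iff_ite.1 b.orthonormal i j
    rw [EuclideanSpace.inner_eq_star_dotProduct, dotProduct_comm] at this
    rw [one_apply, ← this]
    rfl
  refine ⟨⟨V, hV⟩, fun i hi => ⟨‖x i‖, ?_⟩⟩
  have hcol : V.col i = (‖x i‖ : ℂ)⁻¹ • u i := congrArg WithLp.ofLp (hb i hi)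
  rw [hcol, smul_inv_smul₀ (hx i hi)]

theorem exists_eq_smul_col_single {v : ι → ℂ} (hv : v ≠ 0) :
    ∃ V : unitaryGroup ι ℂ, ∃ j, ∃ c : ℂ, v = c • (V : Matrix ι ι ℂ).col j := by
  obtain ⟨j, -⟩ := Function.ne_iff.1 hv
  obtain ⟨V, hV⟩ := exists_eq_smul_col (u := fun _ => v) (s := {j}) (fun _ _ => hv)
    (Set.pairwise_singleton _ _)
  exact ⟨V, j, hV j rfl⟩

theorem exists_eq_smul_col_pair [Nontrivial ι] {u w : ι → ℂ} (hu : u ≠ 0) (hw : w ≠ 0)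
    (huw : star u ⬝ᵥ w = 0) :
    ∃ V : unitaryGroup ι ℂ, ∃ i j, i ≠ j ∧ (∃ a : ℂ, u = a • (V : Matrix ι ι ℂ).col i) ∧
      ∃ b : ℂ, w = b • (V : Matrix ι ι ℂ).col j := by
  obtain ⟨i, j, hij⟩ := exists_pair_ne ι
  have hwu : star w ⬝ᵥ u = 0 := by
    rw [star_dotProduct, huw, star_zero]
  obtain ⟨V, hV⟩ := exists_eq_smul_col (u := Function.update (fun _ => w) i u) (s := {i, j})
    (by simp [hij.symm, hu, hw])
    (by simp [Set.pairwise_pair, hij.symm, huw, hwu])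
  exact ⟨V, i, j, hij, by simpa using hV i (by simp), by simpa [hij.symm] using hV j (by simp)⟩

end Householder

section Reflection

variable {n : ℕ}

/-- Angles in the closed alcove whose phases are all `1`, except for `-1` at `j`. -/
noncomputable def reflectionAngles (j i : Fin n) : ℝ :=
  if i < j then 0 else if i = j then Real.pi else 2 * Real.pi

theorem reflectionAngles_mem_closure_weylAlcove (j : Fin n) :
    reflectionAngles j ∈ closure (weylAlcove n) := by
  have hpi := Real.pi_pos
  refine mem_closure_weylAlcove (fun i k hik => ?_) fun i k => ?_
  · unfold reflectionAngles
    split_ifs <;> first | linarith | omega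
  · unfold reflectionAngles
    split_ifs <;> linarith

theorem phases_reflectionAngles (j : Fin n) :
    phases (reflectionAngles j) = Function.update (1 : Fin n → ℂ) j (-1) := by
  ext i
  rcases lt_trichotomy i j with h | rfl | h
  · simp [phases, reflectionAngles, h, h.ne]
  · simp [phases, reflectionAngles]
  · simp [phases, reflectionAngles, h.ne', h.not_gt]

theorem unitaryOfAngles_reflectionAngles (V : unitaryGroup (Fin n) ℂ) (j : Fin n) :
    unitaryOfAngles V (reflectionAngles j) =
      householder ((V : Matrix (Fin n) (Fin n) ℂ).col j) := by
  have hV : (V : Matrix (Fin n) (Fin n) ℂ) * star (V : Matrix (Fin n) (Fin n) ℂ) = 1 :=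
    Unitary.coe_mul_star_self V
  have hdiag : diagonal (Function.update (1 : Fin n → ℂ) j (-1)) =
      1 - 2 * vecMulVec (Pi.single j 1) (Pi.single j 1) := by
    rw [← single_eq_single_vecMulVec_single, ← diagonal_single, ← diagonal_one,
      ← diagonal_ofNat, diagonal_mul_diagonal, diagonal_sub]
    congr 1
    ext i
    obtain rfl | hij := eq_or_ne i j
    · norm_num
    · simp [hij]
  refine Subtype.ext ?_
  rw [coe_unitaryOfAngles, phases_reflectionAngles, coe_householder, star_col_dotProduct_col,
    one_apply_eq, hdiag, inv_one, one_smul, mul_sub, sub_mul, mul_one, hV, two_mul, two_mul,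
    mul_add, add_mul, mul_vecMulVec, vecMulVec_mul, mulVec_single_one, single_one_vecMul]
  rfl

end Reflection

section Diagonalization

variable {ι : Type*} [Fintype ι] [DecidableEq ι] {A : Matrix ι ι ℂ} {d : ι → ℂ}

theorem mul_eq_mul_diagonal_iff {R : Matrix ι ι ℂ} :
    A * R = R * diagonal d ↔ ∀ j, A *ᵥ R.col j = d j • R.col j := by
  rw [← Matrix.ext_iff, forall_comm]
  refine forall_congr' fun j => funext_iff.symm.trans ?_
  have hcol : (R * diagonal d).col j = d j • R.col j := by
    ext i
    simp [mul_comm]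
  exact hcol ▸ Iff.rfl

theorem col_ne_zero (S : (Matrix ι ι ℂ)ˣ) (j : ι) : S.1.col j ≠ 0 := by
  rw [← mulVec_single_one, ← mulVec_zero S.1]
  exact (mulVec_injective_of_isUnit S.isUnit).ne (Pi.single_ne_zero_iff.2 one_ne_zero)

variable {S : (Matrix ι ι ℂ)ˣ}

theorem mul_eq_mul_diagonal_of_col_eq_smul (h : A * S = S * diagonal d) {R : Matrix ι ι ℂ}
    (hR : ∀ j, ∃ a : ℂ, S.1.col j = a • R.col j) : A * R = R * diagonal d := by
  refine mul_eq_mul_diagonal_iff.2 fun j => ?_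
  obtain ⟨a, ha⟩ := hR j
  have ha₀ : a ≠ 0 := left_ne_zero_of_smul (ha ▸ col_ne_zero S j)
  have hcol := mul_eq_mul_diagonal_iff.1 h j
  rw [ha, mulVec_smul, smul_comm] at hcol
  exact smul_right_injective _ ha₀ hcol

theorem inv_mulVec_eq_zero (h : A * S = S * diagonal d) {x : ι → ℂ} {ε : ℂ}
    (hx : A *ᵥ x = ε • x) {k : ι} (hk : d k ≠ ε) : (S⁻¹.1 *ᵥ x) k = 0 := by
  have hinv : S⁻¹.1 * A = diagonal d * S⁻¹.1 :=
    S.inv_mul_eq_iff_eq_mul.2 (by rw [← mul_assoc, ← h, S.mul_inv_cancel_right])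
  have hcoord := congrArg (S⁻¹.1 *ᵥ ·) hx
  simp only [mulVec_mulVec, hinv, mulVec_smul] at hcoord
  have hcoord_k := congrFun hcoord k
  rw [← mulVec_mulVec, mulVec_diagonal, Pi.smul_apply, smul_eq_mul] at hcoord_k
  exact (mul_eq_mul_right_iff.1 hcoord_k).resolve_left hk

theorem eq_sum_smul_col (S : (Matrix ι ι ℂ)ˣ) (x : ι → ℂ) :
    x = ∑ k, (S⁻¹.1 *ᵥ x) k • S.1.col k := by
  have hx : S.1 *ᵥ (S⁻¹.1 *ᵥ x) = x := by simp
  conv_lhs => rw [← hx, mulVec_eq_sum]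
  simp only [op_smul_eq_smul, col]

end Diagonalization

section ReflectionAxis

variable {n : ℕ} {ψ : unitaryGroup (Fin n) ℂ → Matrix (Fin n) (Fin n) ℂ}
  {V : unitaryGroup (Fin n) ℂ} {S : (Matrix (Fin n) (Fin n) ℂ)ˣ}

theorem IsFrame.map_householder_mul (hS : IsFrame ψ V S) {v : Fin n → ℂ} (hv : v ≠ 0) {c : ℂ}
    {j : Fin n} (hvc : v = c • (V : Matrix (Fin n) (Fin n) ℂ).col j) :
    ψ (householder v) * S = S * diagonal (Function.update (1 : Fin n → ℂ) j (-1)) := by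
  rw [hvc, householder_smul (left_ne_zero_of_smul (hvc ▸ hv)), ← unitaryOfAngles_reflectionAngles,
    hS _ (reflectionAngles_mem_closure_weylAlcove j), phases_reflectionAngles]

/-- `ρ v` spans the line reflected by the image under `ψ` of the reflection along `v`. -/
structure IsReflectionAxisMap (ψ : unitaryGroup (Fin n) ℂ → Matrix (Fin n) (Fin n) ℂ)
    (ρ : (Fin n → ℂ) → Fin n → ℂ) : Prop where
  ne_zero : ∀ {v}, v ≠ 0 → ρ v ≠ 0
  mulVec_eq_neg_iff : ∀ {v x}, v ≠ 0 →
    (ψ (householder v) *ᵥ x = -x ↔ ∃ a : ℂ, x = a • ρ v)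

theorem IsUnitaryPreserver.exists_isReflectionAxisMap (hψ : IsUnitaryPreserver ψ) :
    ∃ ρ, IsReflectionAxisMap ψ ρ := by
  have hline (v : Fin n → ℂ) : ∃ z : Fin n → ℂ, v ≠ 0 →
      z ≠ 0 ∧ ∀ x, ψ (householder v) *ᵥ x = -x ↔ ∃ a : ℂ, x = a • z := by
    obtain rfl | hv := eq_or_ne v 0
    · exact ⟨0, fun h => (h rfl).elim⟩
    obtain ⟨V, j, c, hvc⟩ := exists_eq_smul_col_single hv
    obtain ⟨S, hS⟩ := hψ.exists_isFrame V
    have hdiag := hS.map_householder_mul hv hvc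
    refine ⟨S.1.col j, fun _ => ⟨col_ne_zero S j, fun x => ⟨fun hx => ?_, ?_⟩⟩⟩
    · have hcoord (k : Fin n) (hk : k ≠ j) : (S⁻¹.1 *ᵥ x) k = 0 :=
        inv_mulVec_eq_zero hdiag (hx.trans (neg_one_smul ℂ x).symm) (by simp [hk, self_eq_neg])
      refine ⟨(S⁻¹.1 *ᵥ x) j, (eq_sum_smul_col S x).trans ?_⟩
      exact Fintype.sum_eq_single j fun k hk => by rw [hcoord k hk, zero_smul]
    · rintro ⟨a, rfl⟩
      rw [mulVec_smul, mul_eq_mul_diagonal_iff.1 hdiag, Function.update_self, neg_one_smul,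
        smul_neg]
  choose ρ hρ using hline
  exact ⟨ρ, fun hv => (hρ _ hv).1, fun hv => (hρ _ hv).2 _⟩

theorem IsFrame.exists_col_eq_smul {ρ : (Fin n → ℂ) → Fin n → ℂ}
    (hS : IsFrame ψ V S) (hρ : IsReflectionAxisMap ψ ρ) {v : Fin n → ℂ} (hv : v ≠ 0) {c : ℂ}
    {j : Fin n} (hvc : v = c • (V : Matrix (Fin n) (Fin n) ℂ).col j) :
    ∃ a : ℂ, a ≠ 0 ∧ S.1.col j = a • ρ v := by
  obtain ⟨a, ha⟩ := (hρ.mulVec_eq_neg_iff hv).1 <|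
    (mul_eq_mul_diagonal_iff.1 (hS.map_householder_mul hv hvc) j).trans (by simp)
  exact ⟨a, left_ne_zero_of_smul (ha ▸ col_ne_zero S j), ha⟩

end ReflectionAxis

section ReflectionAxisMap

variable {n : ℕ} {ψ : unitaryGroup (Fin n) ℂ → Matrix (Fin n) (Fin n) ℂ}
  {ρ : (Fin n → ℂ) → Fin n → ℂ} {V : unitaryGroup (Fin n) ℂ} {S : (Matrix (Fin n) (Fin n) ℂ)ˣ}

theorem IsReflectionAxisMap.exists_smul_eq (hρ : IsReflectionAxisMap ψ ρ) {c : ℂ} (hc : c ≠ 0)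
    {v : Fin n → ℂ} (hv : v ≠ 0) : ∃ a : ℂ, ρ (c • v) = a • ρ v := by
  refine (hρ.mulVec_eq_neg_iff hv).1 ?_
  rw [← householder_smul hc]
  exact (hρ.mulVec_eq_neg_iff (smul_ne_zero hc hv)).2 ⟨1, (one_smul ℂ _).symm⟩

theorem IsReflectionAxisMap.mulVec_eq_self [Nontrivial (Fin n)] (hρ : IsReflectionAxisMap ψ ρ)
    (hψ : IsUnitaryPreserver ψ) {v w : Fin n → ℂ} (hv : v ≠ 0) (hw : w ≠ 0)
    (hvw : star v ⬝ᵥ w = 0) : ψ (householder v) *ᵥ ρ w = ρ w := by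
  obtain ⟨V, i, j, hij, ⟨a, hva⟩, b, hwb⟩ := exists_eq_smul_col_pair hv hw hvw
  obtain ⟨S, hS⟩ := hψ.exists_isFrame V
  obtain ⟨c, hc, hcol⟩ := hS.exists_col_eq_smul hρ hw hwb
  have hfix := mul_eq_mul_diagonal_iff.1 (hS.map_householder_mul hv hva) j
  rw [Function.update_of_ne hij.symm, Pi.one_apply, one_smul, hcol, mulVec_smul] at hfix
  exact smul_right_injective _ hc hfix

theorem IsFrame.inv_mulVec_eq_zero_of_orthogonal [Nontrivial (Fin n)] (hS : IsFrame ψ V S)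
    (hψ : IsUnitaryPreserver ψ) (hρ : IsReflectionAxisMap ψ ρ) {w : Fin n → ℂ} (hw : w ≠ 0)
    {l : Fin n} (hl : star ((V : Matrix (Fin n) (Fin n) ℂ).col l) ⬝ᵥ w = 0) :
    (S⁻¹.1 *ᵥ ρ w) l = 0 := by
  have hcol := col_ne_zero (Unitary.toUnits V) l
  refine inv_mulVec_eq_zero (ε := 1) (hS.map_householder_mul hcol (one_smul ℂ _).symm) ?_ ?_
  · rw [one_smul]
    exact hρ.mulVec_eq_self hψ hcol hw hl
  · rw [Function.update_self]
    norm_num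

theorem IsReflectionAxisMap.exists_add_eq [Nontrivial (Fin n)] (hρ : IsReflectionAxisMap ψ ρ)
    (hψ : IsUnitaryPreserver ψ) {u w : Fin n → ℂ} (hu : u ≠ 0) (hw : w ≠ 0)
    (huw : star u ⬝ᵥ w = 0) : ∃ a b : ℂ, ρ (u + w) = a • ρ u + b • ρ w := by
  obtain ⟨V, i, j, hij, ⟨a, hua⟩, b, hwb⟩ := exists_eq_smul_col_pair hu hw huw
  obtain ⟨S, hS⟩ := hψ.exists_isFrame V
  obtain ⟨a', -, hi⟩ := hS.exists_col_eq_smul hρ hu hua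
  obtain ⟨b', -, hj⟩ := hS.exists_col_eq_smul hρ hw hwb
  have hcoord (l : Fin n) (hl : l ≠ i ∧ l ≠ j) : (S⁻¹.1 *ᵥ ρ (u + w)) l = 0 := by
    refine hS.inv_mulVec_eq_zero_of_orthogonal hψ hρ (add_ne_zero_of_orthogonal hu huw) ?_
    rw [hua, hwb, dotProduct_add, dotProduct_smul, dotProduct_smul, star_col_dotProduct_col,
      star_col_dotProduct_col, one_apply_ne hl.1, one_apply_ne hl.2, smul_zero, smul_zero, add_zero]
  refine ⟨(S⁻¹.1 *ᵥ ρ (u + w)) i * a', (S⁻¹.1 *ᵥ ρ (u + w)) j * b', ?_⟩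
  rw [mul_smul, mul_smul, ← hi, ← hj]
  refine (eq_sum_smul_col S _).trans (Fintype.sum_eq_add i j hij fun l hl => ?_)
  rw [hcoord l hl, zero_smul]

theorem IsUnitaryPreserver.map_householder_mul_self (hψ : IsUnitaryPreserver ψ) {v : Fin n → ℂ}
    (hv : v ≠ 0) : ψ (householder v) * ψ (householder v) = 1 := by
  obtain ⟨V, j, c, hvc⟩ := exists_eq_smul_col_single hv
  obtain ⟨S, hS⟩ := hψ.exists_isFrame V
  have hdiag := hS.map_householder_mul hv hvc
  have hsq : diagonal (Function.update (1 : Fin n → ℂ) j (-1)) *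
      diagonal (Function.update (1 : Fin n → ℂ) j (-1)) = 1 := by
    rw [diagonal_mul_diagonal, ← diagonal_one]
    congr 1
    ext k
    obtain rfl | hk := eq_or_ne k j <;> simp [*]
  rw [← S.mul_left_inj, mul_assoc, hdiag, ← mul_assoc, hdiag, mul_assoc, hsq, mul_one, one_mul]

theorem IsReflectionAxisMap.exists_lift (hρ : IsReflectionAxisMap ψ ρ)
    (hψ : IsUnitaryPreserver ψ) {v : Fin n → ℂ} (hv : v ≠ 0) :
    ∃ s : (Fin n → ℂ) → Fin n → ℂ, ContinuousAt s v ∧ s v ≠ 0 ∧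
      ∀ᶠ w in 𝓝 v, ∃ a : ℂ, s w = a • ρ w := by
  refine ⟨fun w => ρ v - ψ (householder w) *ᵥ ρ v, ?_, ?_, ?_⟩
  · have hmulVec : Continuous fun A : Matrix (Fin n) (Fin n) ℂ => ρ v - A *ᵥ ρ v := by fun_prop
    exact (hmulVec.comp hψ.continuous).continuousAt.comp (continuousAt_householder hv)
  · change ρ v - ψ (householder v) *ᵥ ρ v ≠ 0
    rw [(hρ.mulVec_eq_neg_iff hv).2 ⟨1, (one_smul ℂ _).symm⟩, sub_neg_eq_add, ← two_smul ℂ]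
    exact smul_ne_zero two_ne_zero (hρ.ne_zero hv)
  · filter_upwards [isOpen_ne.mem_nhds hv] with w hw
    rw [← hρ.mulVec_eq_neg_iff hw, mulVec_sub, mulVec_mulVec, hψ.map_householder_mul_self hw,
      one_mulVec, neg_sub]

theorem IsReflectionAxisMap.isOrthoadditiveLineMap [Nontrivial (Fin n)]
    (hρ : IsReflectionAxisMap ψ ρ) (hψ : IsUnitaryPreserver ψ) (hS : IsFrame ψ 1 S) :
    IsOrthoadditiveLineMap fun v => S⁻¹.1 *ᵥ ρ v where
  ne_zero hv := by
    rw [← mulVec_zero S⁻¹.1]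
    exact (mulVec_injective_of_isUnit S⁻¹.isUnit).ne (hρ.ne_zero hv)
  apply_eq_zero {v i} hv hi := hS.inv_mulVec_eq_zero_of_orthogonal hψ hρ hv <| by
    simpa [dotProduct, one_apply] using hi
  smul hc hv := by
    obtain ⟨a, ha⟩ := hρ.exists_smul_eq hc hv
    exact ⟨a, by rw [ha, mulVec_smul]⟩
  add hu hw huw := by
    obtain ⟨a, b, hab⟩ := hρ.exists_add_eq hψ hu hw huw
    exact ⟨a, b, by rw [hab, mulVec_add, mulVec_smul, mulVec_smul]⟩
  exists_lift {v} hv := by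
    obtain ⟨s, hs, hsv, hlift⟩ := hρ.exists_lift hψ hv
    refine ⟨fun w => S⁻¹.1 *ᵥ s w, by fun_prop, ?_, ?_⟩
    · rw [← mulVec_zero S⁻¹.1]
      exact (mulVec_injective_of_isUnit S⁻¹.isUnit).ne hsv
    · filter_upwards [hlift] with w ⟨a, ha⟩
      exact ⟨a, by rw [ha, mulVec_smul]⟩

end ReflectionAxisMap

/-! ### The form of the preserver -/

section Conjugation

variable {n : ℕ} {ψ : unitaryGroup (Fin n) ℂ → Matrix (Fin n) (Fin n) ℂ}
  {ρ : (Fin n → ℂ) → Fin n → ℂ} {T : (Matrix (Fin n) (Fin n) ℂ)ˣ}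

theorem IsReflectionAxisMap.exists_eq_smul_mulVec (hρ : IsReflectionAxisMap ψ ρ)
    (hψ : IsUnitaryPreserver ψ) (hn : 3 ≤ n) : ∃ T : (Matrix (Fin n) (Fin n) ℂ)ˣ,
      (∀ v ≠ 0, ∃ a : ℂ, ρ v = a • T.1 *ᵥ v) ∨ ∀ v ≠ 0, ∃ a : ℂ, ρ v = a • T.1 *ᵥ star v := by
  have : Nontrivial (Fin n) := Fin.nontrivial_iff_two_le.2 (by lia)
  obtain ⟨S, hS⟩ := hψ.exists_isFrame 1
  obtain ⟨m, hm, hline⟩ := (hρ.isOrthoadditiveLineMap hψ hS).exists_eq_smul_mul_or_star (by simpa)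
  have hunit : IsUnit (diagonal m) := isUnit_diagonal.2 (Pi.isUnit_iff.2 fun i => (hm i).isUnit)
  have hpull {x y : Fin n → ℂ} {a : ℂ} (h : S⁻¹.1 *ᵥ x = a • (m * y)) :
      x = a • (S * hunit.unit).1 *ᵥ y := by
    have hmy : diagonal m *ᵥ y = m * y := funext fun i => mulVec_diagonal m y i
    rw [Units.val_mul, IsUnit.unit_spec, ← mulVec_mulVec, hmy, ← mulVec_smul, ← h]
    simp
  refine ⟨S * hunit.unit, hline.imp ?_ ?_⟩ <;>
  · intro h v hv
    obtain ⟨a, ha⟩ := h v hv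
    exact ⟨a, hpull ha⟩

theorem IsFrame.map_mul_eq_mul_diagonal {V : unitaryGroup (Fin n) ℂ}
    {S : (Matrix (Fin n) (Fin n) ℂ)ˣ} (hS : IsFrame ψ V S) (hρ : IsReflectionAxisMap ψ ρ)
    {θ : Fin n → ℝ} (hθ : θ ∈ closure (weylAlcove n)) {R : Matrix (Fin n) (Fin n) ℂ}
    (hR : ∀ j, ∃ a : ℂ, ρ ((V : Matrix (Fin n) (Fin n) ℂ).col j) = a • R.col j) :
    ψ (unitaryOfAngles V θ) * R = R * diagonal (phases θ) := by
  refine mul_eq_mul_diagonal_of_col_eq_smul (hS θ hθ) fun j => ?_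
  have hV : (V : Matrix (Fin n) (Fin n) ℂ).col j ≠ 0 := col_ne_zero (Unitary.toUnits V) j
  obtain ⟨a, -, ha⟩ := hS.exists_col_eq_smul hρ hV (one_smul ℂ _).symm
  obtain ⟨b, hb⟩ := hR j
  exact ⟨a * b, by rw [ha, hb, mul_smul]⟩

theorem IsReflectionAxisMap.map_eq_conj (hρ : IsReflectionAxisMap ψ ρ)
    (hψ : IsUnitaryPreserver ψ) (hT : ∀ v ≠ 0, ∃ a : ℂ, ρ v = a • T.1 *ᵥ v)
    (X : unitaryGroup (Fin n) ℂ) : ψ X = T * (X : Matrix (Fin n) (Fin n) ℂ) * T⁻¹.1 := by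
  obtain ⟨V, θ, hθ, rfl⟩ := exists_unitaryOfAngles_eq_of_mem_closure X
  obtain ⟨S, hS⟩ := hψ.exists_isFrame V
  have hTV := hS.map_mul_eq_mul_diagonal hρ hθ (R := T * V) fun j =>
    hT _ (col_ne_zero (Unitary.toUnits V) j)
  rw [T.eq_mul_inv_iff_mul_eq, coe_unitaryOfAngles, ← mul_assoc, ← mul_assoc, ← hTV]
  simp only [mul_assoc, mem_unitaryGroup_iff.1 V.2, mul_one]

theorem IsReflectionAxisMap.map_eq_conj_transpose (hρ : IsReflectionAxisMap ψ ρ)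
    (hψ : IsUnitaryPreserver ψ) (hT : ∀ v ≠ 0, ∃ a : ℂ, ρ v = a • T.1 *ᵥ star v)
    (X : unitaryGroup (Fin n) ℂ) : ψ X = T * (X : Matrix (Fin n) (Fin n) ℂ)ᵀ * T⁻¹.1 := by
  obtain ⟨V, θ, hθ, rfl⟩ := exists_unitaryOfAngles_eq_of_mem_closure X
  obtain ⟨S, hS⟩ := hψ.exists_isFrame V
  have hTV := hS.map_mul_eq_mul_diagonal hρ hθ (R := T * (star (V : Matrix (Fin n) (Fin n) ℂ))ᵀ)
    fun j => hT _ (col_ne_zero (Unitary.toUnits V) j)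
  have hV : (star (V : Matrix (Fin n) (Fin n) ℂ))ᵀ * (V : Matrix (Fin n) (Fin n) ℂ)ᵀ = 1 := by
    rw [← transpose_mul, mem_unitaryGroup_iff.1 V.2, transpose_one]
  rw [T.eq_mul_inv_iff_mul_eq, coe_unitaryOfAngles, transpose_mul, transpose_mul,
    diagonal_transpose, ← mul_assoc, ← mul_assoc, ← hTV]
  simp only [mul_assoc, hV, mul_one]

theorem IsUnitaryPreserver.exists_eq_conj_or_transpose (hψ : IsUnitaryPreserver ψ) (hn : 3 ≤ n) :
    ∃ T : (Matrix (Fin n) (Fin n) ℂ)ˣ,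
      (∀ X, ψ X = T * (X : Matrix (Fin n) (Fin n) ℂ) * T⁻¹.1) ∨
        ∀ X, ψ X = T * (X : Matrix (Fin n) (Fin n) ℂ)ᵀ * T⁻¹.1 := by
  obtain ⟨ρ, hρ⟩ := hψ.exists_isReflectionAxisMap
  obtain ⟨T, hT⟩ := hρ.exists_eq_smul_mulVec hψ hn
  exact ⟨T, hT.imp (hρ.map_eq_conj hψ) (hρ.map_eq_conj_transpose hψ)⟩

end Conjugation

/-- For `n ≥ 3`, any continuous, commutativity-preserving and
spectrum-shrinking map `φ : U(n) → M_n` is of the form `φ(X) = T X T⁻¹` or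
`φ(X) = T Xᵗ T⁻¹` for some `T ∈ GL(n)`. -/
theorem preserver_Un (n : ℕ) (hn : 3 ≤ n)
    (φ : {X : Matrix (Fin n) (Fin n) ℂ // X * X.conjTranspose = 1} →
      Matrix (Fin n) (Fin n) ℂ)
    (hcont : Continuous φ)
    (hcomm : ∀ X Y, X.val * Y.val = Y.val * X.val → φ X * φ Y = φ Y * φ X)
    (hshrink : ∀ X, spectrum ℂ (φ X) ⊆ spectrum ℂ X.val) :
    ∃ T : Matrix (Fin n) (Fin n) ℂ, IsUnit T ∧
      ((∀ X, φ X = T * X.val * T⁻¹) ∨ (∀ X, φ X = T * X.val.transpose * T⁻¹)) := by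
  let ψ (X : unitaryGroup (Fin n) ℂ) : Matrix (Fin n) (Fin n) ℂ :=
    φ ⟨X, mem_unitaryGroup_iff.1 X.2⟩
  have hψ : IsUnitaryPreserver ψ :=
    { continuous := by fun_prop
      commute := fun X Y h => hcomm _ _ (congrArg Subtype.val h.eq)
      spectrum_subset := fun X => hshrink _ }
  obtain ⟨T, hT⟩ := hψ.exists_eq_conj_or_transpose hn
  have hmem (X : {X : Matrix (Fin n) (Fin n) ℂ // X * X.conjTranspose = 1}) :
      X.val ∈ unitaryGroup (Fin n) ℂ := mem_unitaryGroup_iff.2 X.2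
  rw [coe_units_inv] at hT
  exact ⟨T, T.isUnit, hT.imp (fun h X => h ⟨X, hmem X⟩) fun h X => h ⟨X, hmem X⟩⟩
end

section
/- Let n ≥ 3 and let φ : N_n → M_n be a continuous, commutativity-preserving and spectrum-shrinking map defined on the set N_n of normal n×n complex matrices. Then there exists T ∈ GL(n) such that either φ(X) = T X T⁻¹ for all X ∈ N_n, or φ(X) = T Xᵗ T⁻¹ for all X ∈ N_n (where Xᵗ denotes the transpose). -/
open Matrix

/-!
Along the connected set of diagonal matrices with distinct entries, and along paths of unitary
frames, the spectrum of `φ X` cannot jump, so it is all of `sp X`; by commutativity `φ` acts on the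
matrices diagonal in an orthonormal frame as conjugation by a single invertible matrix. Hence `φ`
is determined by the map `ψ u = φ (u u* / ⟨u, u⟩)`, whose values are rank-one idempotents with
`ψ u ψ v = 0` if and only if `u ⟂ v`. Normalise `ψ` on the standard basis and pass to an affine
chart. Orthogonality of two lines then becomes a relation `1 + a c + b d = 0` between coordinates,
and it is carried to the same relation between the coordinates of the images. This makes the
coordinate change a ring homomorphism `F : ℂ → ℂ`. Being continuous, `F` is the identity or
complex conjugation, and these two cases give `X ↦ T X T⁻¹` and `X ↦ T Xᵗ T⁻¹`.
-/

namespace NormalPreserver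

section EigenvalueContinuation

variable {K n ι : Type*} [Field K] [Fintype n] [DecidableEq n]

theorem mem_spectrum_iff_det_eq_zero {M : Matrix n n K} {x : K} :
    x ∈ spectrum K M ↔ (scalar n x - M).det = 0 := by
  rw [mem_spectrum_iff_isRoot_charpoly, Polynomial.IsRoot, eval_charpoly]

variable [IsAlgClosed K]

theorem exists_det_scalar_sub_eq_prod_pow [Fintype ι] {M : Matrix n n K} {μ : ι → K}
    (hμ : Function.Injective μ) (hM : spectrum K M ⊆ Set.range μ) :
    ∃ m : ι → Fin (Fintype.card n + 1),
      ∀ x, (scalar n x - M).det = ∏ i, (x - μ i) ^ (m i : ℕ) := by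
  classical
  have hsplit : M.charpoly.Splits := IsAlgClosed.splits _
  have hcount (a : K) : M.charpoly.roots.count a < Fintype.card n + 1 := by
    rw [Nat.lt_succ_iff, ← charpoly_natDegree_eq_dim M, hsplit.natDegree_eq_card_roots]
    exact Multiset.count_le_card _ _
  refine ⟨fun i ↦ ⟨M.charpoly.roots.count (μ i), hcount _⟩, fun x ↦ ?_⟩
  have hroots : M.charpoly.roots.toFinset ⊆ Finset.univ.image μ := fun a ha ↦ by
    obtain ⟨i, rfl⟩ := hM (mem_spectrum_of_isRoot_charpoly
      (Polynomial.isRoot_of_mem_roots (Multiset.mem_toFinset.mp ha)))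
    exact Finset.mem_image_of_mem μ (Finset.mem_univ i)
  calc (scalar n x - M).det
      = (M.charpoly.roots.map fun a ↦ x - a).prod := by
        rw [← eval_charpoly, hsplit.eval_eq_prod_roots_of_monic (charpoly_monic M)]
    _ = ∏ a ∈ Finset.univ.image μ, (x - a) ^ M.charpoly.roots.count a := by
        rw [Finset.prod_multiset_map_count]
        exact Finset.prod_subset hroots fun a _ ha ↦ by
          rw [Multiset.count_eq_zero.mpr (mt Multiset.mem_toFinset.mpr ha), pow_zero]
    _ = ∏ i, (x - μ i) ^ M.charpoly.roots.count (μ i) := Finset.prod_image hμ.injOn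

variable [Finite ι] [TopologicalSpace K] [IsTopologicalRing K] [T2Space K]
  {S : Type*} [TopologicalSpace S] [PreconnectedSpace S]

theorem mem_spectrum_of_preconnected {M : S → Matrix n n K} (hM : Continuous M)
    {μ : S → ι → K} (hμ : Continuous μ) (hinj : ∀ s, Function.Injective (μ s))
    (hspec : ∀ s, spectrum K (M s) ⊆ Set.range (μ s)) {i : ι} {s : S} (t : S)
    (hs : μ s i ∈ spectrum K (M s)) : μ t i ∈ spectrum K (M t) := by
  have := Fintype.ofFinite ι
  let detAt (s : S) : K := (scalar n (μ s i) - M s).det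
  have hdet : Continuous detAt :=
    (((continuous_pi fun _ ↦ (continuous_apply i).comp hμ).matrix_diagonal).sub hM).matrix_det
  -- Off the zero set, `detAt` is one of finitely many products without the factor `μ s i - μ s i`.
  have hcompl : {s | detAt s = 0}ᶜ = ⋃ m ∈ {m : ι → Fin (Fintype.card n + 1) | m i = 0},
      {s | detAt s = ∏ j, (μ s i - μ s j) ^ (m j : ℕ)} := by
    ext s
    simp only [Set.mem_compl_iff, Set.mem_ofPred_eq, Set.mem_iUnion, exists_prop]
    refine ⟨fun hne ↦ ?_, fun ⟨m, hmi, hm⟩ ↦ ?_⟩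
    · obtain ⟨m, hm⟩ := exists_det_scalar_sub_eq_prod_pow (hinj s) (hspec s)
      refine ⟨m, not_not.mp fun hmi ↦ hne ?_, hm _⟩
      exact (hm _).trans (Finset.prod_eq_zero (Finset.mem_univ i)
        (by rw [sub_self, zero_pow (Fin.val_ne_zero_iff.mpr hmi)]))
    · refine hm.trans_ne (Finset.prod_ne_zero_iff.mpr ?_)
      intro j _
      by_cases hij : j = i
      · simp [hij, hmi]
      · exact pow_ne_zero _ (sub_ne_zero.mpr fun h ↦ hij (hinj s h).symm)
  have hclopen : IsClopen {s | detAt s = 0} := by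
    refine ⟨isClosed_eq hdet continuous_const, isClosed_compl_iff.mp ?_⟩
    rw [hcompl]
    exact (Set.toFinite _).isClosed_biUnion fun m _ ↦ isClosed_eq hdet (by fun_prop)
  have huniv := hclopen.eq_univ ⟨s, mem_spectrum_iff_det_eq_zero.mp hs⟩
  exact mem_spectrum_iff_det_eq_zero.mpr (huniv.ge (Set.mem_univ t))

theorem eq_of_preconnected_of_mem_range {e : S → K} (he : Continuous e)
    {μ : S → ι → K} (hμ : Continuous μ) (hinj : ∀ s, Function.Injective (μ s))
    (hrange : ∀ s, e s ∈ Set.range (μ s)) {i : ι} {s : S} (t : S)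
    (hs : e s = μ s i) : e t = μ t i := by
  have hspec (s : S) : spectrum K (diagonal fun _ : Unit ↦ e s) = {e s} := by
    rw [spectrum_diagonal, Set.range_const]
  have := mem_spectrum_of_preconnected (M := fun s ↦ diagonal fun _ : Unit ↦ e s)
    (continuous_pi fun _ ↦ he).matrix_diagonal hμ hinj
    (fun s ↦ by simpa only [hspec, Set.singleton_subset_iff] using hrange s) (i := i) (s := s) t
    (by rw [hspec, hs]; rfl)
  rw [hspec] at this
  exact this.symm

end EigenvalueContinuation

section InjectiveTuples

variable {ι : Type*} [Finite ι]

theorem countable_not_injective_lineMap {a : ι → ℂ} (ha : Function.Injective a) (b : ι → ℂ) :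
    {z : ℂ | ¬ Function.Injective (AffineMap.lineMap b a z : ι → ℂ)}.Countable := by
  have hsub : {z : ℂ | ¬ Function.Injective (AffineMap.lineMap b a z : ι → ℂ)} ⊆
      ⋃ p : ι × ι, {z | p.1 ≠ p.2 ∧
        (AffineMap.lineMap b a z : ι → ℂ) p.1 = (AffineMap.lineMap b a z : ι → ℂ) p.2} := by
    intro z hz
    simp only [Set.mem_ofPred_eq, Function.Injective, not_forall] at hz
    obtain ⟨i, j, heq, hij⟩ := hz
    exact Set.mem_iUnion.mpr ⟨(i, j), hij, heq⟩
  refine (Set.countable_iUnion fun p ↦ Set.Subsingleton.countable ?_).mono hsub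
  rintro z ⟨hne, hz⟩ w ⟨-, hw⟩
  simp only [AffineMap.lineMap_apply, vsub_eq_sub, vadd_eq_add, Pi.add_apply, Pi.smul_apply,
    Pi.sub_apply, smul_eq_mul] at hz hw
  have hprod : (z - w) * (a p.1 - a p.2 - (b p.1 - b p.2)) = 0 := by linear_combination hz - hw
  rcases mul_eq_zero.mp hprod with h | h
  · exact sub_eq_zero.mp h
  · exact absurd (ha (by linear_combination hz + (1 - z) * h)) hne

instance preconnectedSpace_injective_tuples :
    PreconnectedSpace {d : ι → ℂ // Function.Injective d} := by
  refine Subtype.preconnectedSpace (isPreconnected_of_forall_pair fun a ha b hb ↦ ?_)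
  have hrank : 1 < Module.rank ℝ ℂ := by rw [Complex.rank_real_complex]; norm_num
  have hpath := ((countable_not_injective_lineMap ha b).isPathConnected_compl_of_one_lt_rank hrank)
  have hcont : Continuous (AffineMap.lineMap b a : ℂ → ι → ℂ) := AffineMap.lineMap_continuous
  refine ⟨AffineMap.lineMap b a '' _, ?_, ⟨1, ?_, AffineMap.lineMap_apply_one b a⟩,
    ⟨0, ?_, AffineMap.lineMap_apply_zero b a⟩,
    hpath.isConnected.isPreconnected.image _ hcont.continuousOn⟩
  · rintro _ ⟨z, hz, rfl⟩
    exact not_not.mp hz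
  · exact not_not.mpr (by rwa [AffineMap.lineMap_apply_one])
  · exact not_not.mpr (by rwa [AffineMap.lineMap_apply_zero])

theorem exists_injective_tuple (ι : Type*) [Finite ι] : ∃ d : ι → ℂ, Function.Injective d := by
  obtain ⟨f, hf⟩ := Countable.exists_injective_nat ι
  exact ⟨fun i ↦ f i, Nat.cast_injective.comp hf⟩

theorem dense_injective_tuples : Dense {d : ι → ℂ | Function.Injective d} := by
  intro b
  obtain ⟨a, ha⟩ := exists_injective_tuple ι
  have hdense := (countable_not_injective_lineMap ha b).dense_compl ℝ
  have hcont : Continuous (AffineMap.lineMap b a : ℂ → ι → ℂ) := AffineMap.lineMap_continuous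
  have hb := hcont.range_subset_closure_image_dense hdense ⟨0, AffineMap.lineMap_apply_zero b a⟩
  refine closure_mono ?_ hb
  rintro _ ⟨z, hz, rfl⟩
  exact not_not.mp hz

end InjectiveTuples

section SpectralTheorem

open scoped ComplexStarModule

theorem exists_orthonormalBasis_joint_eigenvectors {𝕜 E : Type*} [RCLike 𝕜]
    [NormedAddCommGroup E] [InnerProductSpace 𝕜 E] [FiniteDimensional 𝕜 E] {A B : E →ₗ[𝕜] E}
    (hA : A.IsSymmetric) (hB : B.IsSymmetric) (hAB : Commute A B) :
    ∃ (b : OrthonormalBasis (Fin (Module.finrank 𝕜 E)) 𝕜 E) (α β : Fin (Module.finrank 𝕜 E) → 𝕜),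
      ∀ i, A (b i) = α i • b i ∧ B (b i) = β i • b i := by
  classical
  have hinternal := LinearMap.IsSymmetric.directSum_isInternal_of_commute hA hB hAB
  have horth := LinearMap.IsSymmetric.orthogonalFamily_eigenspace_inf_eigenspace hA hB
  have hne := DirectSum.isInternal_ne_bot_iff.mpr hinternal
  let _ := hinternal.submodule_iSupIndep.fintypeNeBotOfFiniteDimensional
  have horth' := horth.comp (γ := {p : 𝕜 × 𝕜 //
    Module.End.eigenspace A p.2 ⊓ Module.End.eigenspace B p.1 ≠ ⊥}) Subtype.val_injective
  refine ⟨hne.subordinateOrthonormalBasis rfl horth',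
    fun i ↦ (hne.subordinateOrthonormalBasisIndex rfl i horth').1.2,
    fun i ↦ (hne.subordinateOrthonormalBasisIndex rfl i horth').1.1, fun i ↦ ?_⟩
  have hmem := hne.subordinateOrthonormalBasis_subordinate rfl i horth'
  rwa [Submodule.mem_inf, Module.End.mem_eigenspace_iff, Module.End.mem_eigenspace_iff] at hmem

theorem exists_orthonormalBasis_eigenvectors {n : Type*} [Fintype n] {X : Matrix n n ℂ}
    (hX : IsStarNormal X) : ∃ (b : OrthonormalBasis n ℂ (EuclideanSpace ℂ n)) (d : n → ℂ),
      ∀ i, X *ᵥ (b i).ofLp = d i • (b i).ofLp := by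
  classical
  have hcomm : Commute (toEuclideanLin (ℜ X : Matrix n n ℂ)) (toEuclideanLin (ℑ X)) := by
    ext v i
    simpa [toEuclideanLin, toLpLin_apply] using
      congrArg (fun M ↦ (M *ᵥ v.ofLp) i) (Commute.realPart_imaginaryPart X).eq
  obtain ⟨b, α, β, hb⟩ := exists_orthonormalBasis_joint_eigenvectors
    (isSymmetric_toEuclideanLin_iff.mpr (ℜ X).2) (isSymmetric_toEuclideanLin_iff.mpr (ℑ X).2) hcomm
  let σ : Fin (Module.finrank ℂ (EuclideanSpace ℂ n)) ≃ n :=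
    (finCongr (finrank_euclideanSpace)).trans (Fintype.equivFin n).symm
  refine ⟨b.reindex σ, fun i ↦ α (σ.symm i) + Complex.I * β (σ.symm i), fun i ↦ ?_⟩
  have hre := congrArg WithLp.ofLp (hb (σ.symm i)).1
  have him := congrArg WithLp.ofLp (hb (σ.symm i)).2
  simp only [toEuclideanLin, toLpLin_apply, WithLp.ofLp_smul] at hre him
  rw [b.reindex_apply, ← realPart_add_I_smul_imaginaryPart X, add_mulVec, smul_mulVec, hre, him,
    add_smul, mul_smul]

end SpectralTheorem

/-- The space `N_n` of normal matrices, as a subtype of the space of all matrices. -/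
abbrev NormalMatrix (n : Type*) [Fintype n] := {X : Matrix n n ℂ // X * Xᴴ = Xᴴ * X}

/-- The hypotheses on `φ : N_n → M_n`: it is continuous, commutativity-preserving and
spectrum-shrinking. -/
structure IsNormalPreserver {n : Type*} [Fintype n] [DecidableEq n]
    (φ : NormalMatrix n → Matrix n n ℂ) : Prop where
  continuous : Continuous φ
  commute : ∀ X Y : NormalMatrix n, Commute X.val Y.val → Commute (φ X) (φ Y)
  spectrum_subset : ∀ X : NormalMatrix n, spectrum ℂ (φ X) ⊆ spectrum ℂ X.val

variable {n : Type*} [Fintype n] [DecidableEq n]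

/-- The normal matrix `U diag(d) U*` with eigenvalues `d` in the orthonormal frame `U`. -/
noncomputable def conjDiagonal (U : unitaryGroup n ℂ) (d : n → ℂ) : NormalMatrix n :=
  ⟨Unitary.conjStarAlgAut ℂ _ U (diagonal d), by
    rw [← star_eq_conjTranspose, ← map_star, ← map_mul, ← map_mul, star_eq_conjTranspose,
      diagonal_conjTranspose, (commute_diagonal d (star d)).eq]⟩

/-- The unitary matrix whose columns are the vectors of an orthonormal basis. -/
noncomputable def basisUnitary (b : OrthonormalBasis n ℂ (EuclideanSpace ℂ n)) :
    unitaryGroup n ℂ :=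
  ⟨_, (EuclideanSpace.basisFun n ℂ).toMatrix_orthonormalBasis_mem_unitary b⟩

theorem basisUnitary_apply (b : OrthonormalBasis n ℂ (EuclideanSpace ℂ n)) (i j : n) :
    (basisUnitary b : Matrix n n ℂ) i j = b j i := by
  simp [basisUnitary, Module.Basis.toMatrix_apply]

theorem coe_conjDiagonal (U : unitaryGroup n ℂ) (d : n → ℂ) :
    (conjDiagonal U d : Matrix n n ℂ) = U * diagonal d * (U : Matrix n n ℂ)ᴴ := rfl

theorem eq_conjDiagonal_of_eigenvectors {X : NormalMatrix n}
    {b : OrthonormalBasis n ℂ (EuclideanSpace ℂ n)} {d : n → ℂ}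
    (h : ∀ i, X.val *ᵥ (b i).ofLp = d i • (b i).ofLp) : X = conjDiagonal (basisUnitary b) d := by
  have hcols : X.val * basisUnitary b = basisUnitary b * diagonal d := by
    ext i j
    rw [mul_diagonal, basisUnitary_apply, mul_comm]
    simpa [mul_apply, mulVec, dotProduct, basisUnitary_apply] using congrFun (h j) i
  refine Subtype.ext ?_
  rw [coe_conjDiagonal, ← hcols, Matrix.mul_assoc, ← star_eq_conjTranspose,
    Unitary.mul_star_self_of_mem (basisUnitary b).2, Matrix.mul_one]

theorem exists_eq_conjDiagonal (X : NormalMatrix n) :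
    ∃ b d, X = conjDiagonal (basisUnitary b) d := by
  obtain ⟨b, d, h⟩ := exists_orthonormalBasis_eigenvectors (isStarNormal_iff _ |>.mpr X.2.symm)
  exact ⟨b, d, eq_conjDiagonal_of_eigenvectors h⟩

theorem commute_conjDiagonal (U : unitaryGroup n ℂ) (d e : n → ℂ) :
    Commute (conjDiagonal U d).val (conjDiagonal U e).val :=
  (commute_diagonal d e).map (Unitary.conjStarAlgAut ℂ _ U)

theorem spectrum_conjDiagonal (U : unitaryGroup n ℂ) (d : n → ℂ) :
    spectrum ℂ (conjDiagonal U d).val = Set.range d :=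
  (AlgEquiv.spectrum_eq _ _).trans (spectrum_diagonal d)

theorem continuous_conjDiagonal {S : Type*} [TopologicalSpace S] {U : S → unitaryGroup n ℂ}
    {d : S → n → ℂ} (hU : Continuous U) (hd : Continuous d) :
    Continuous fun s ↦ conjDiagonal (U s) (d s) := by
  have hU' : Continuous fun s ↦ (U s : Matrix n n ℂ) := continuous_subtype_val.comp hU
  exact ((hU'.matrix_mul hd.matrix_diagonal).matrix_mul hU'.star).subtype_mk _

theorem diagonal_comp_swap (i j : n) (d : n → ℂ) :
    diagonal (d ∘ Equiv.swap i j) = swap ℂ i j * diagonal d * swap ℂ i j := by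
  have hmul : swap ℂ i j * diagonal d = diagonal (d ∘ Equiv.swap i j) * swap ℂ i j := by
    ext a b
    rw [diagonal_mul, mul_diagonal, swap, Equiv.Perm.permMatrix, PEquiv.toMatrix_apply]
    by_cases h : Equiv.swap i j a = b <;> simp [h]
  rw [hmul, Matrix.mul_assoc, swap_mul_self, Matrix.mul_one]

/-- The transposition matrix of `i` and `j`, as a unitary matrix. -/
def unitarySwap (i j : n) : unitaryGroup n ℂ :=
  ⟨swap ℂ i j, mem_unitaryGroup_iff.mpr <| by
    rw [star_eq_conjTranspose, conjTranspose_swap, swap_mul_self]⟩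

theorem conjDiagonal_mul_unitarySwap (U : unitaryGroup n ℂ) (i j : n) (d : n → ℂ) :
    conjDiagonal (U * unitarySwap i j) d = conjDiagonal U (d ∘ Equiv.swap i j) := by
  refine Subtype.ext ?_
  simp only [coe_conjDiagonal, diagonal_comp_swap, UnitaryGroup.mul_val, unitarySwap,
    conjTranspose_mul, conjTranspose_swap, Matrix.mul_assoc]

-- For a self-adjoint unitary `J`, the matrices `((1 + z) + (1 - z) J) / 2` with `|z| = 1` are
-- unitary, and lead from `1` at `z = 1` to `J` at `z = -1`.
theorem joined_one_of_star_eq_self {J : unitaryGroup n ℂ} (hJ : star J = J) : Joined 1 J := by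
  have hJJ : (J : Matrix n n ℂ) * J = 1 := by
    nth_rewrite 1 [← hJ]
    exact Unitary.star_mul_self_of_mem J.2
  have hunitary (z : Circle) : ((1 + z : ℂ) / 2) • (1 : Matrix n n ℂ) + ((1 - z : ℂ) / 2) • J.val ∈
      unitaryGroup n ℂ := by
    have hstar : star (J : Matrix n n ℂ) = J := congrArg Subtype.val hJ
    have hz : (z : ℂ) * star (z : ℂ) = 1 := by
      rw [Complex.star_def, Complex.mul_conj, Circle.normSq_coe, Complex.ofReal_one]
    rw [mem_unitaryGroup_iff, star_add, star_smul, star_smul, star_one, hstar, add_mul, mul_add,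
      mul_add, smul_mul_smul_comm, smul_mul_smul_comm, smul_mul_smul_comm, smul_mul_smul_comm, hJJ]
    simp only [mul_one, one_mul, star_div₀, star_add, star_sub, star_one, star_ofNat]
    match_scalars
    · linear_combination hz / 2
    · linear_combination -hz / 2
  have hcont : Continuous fun z : Circle ↦ (⟨_, hunitary z⟩ : unitaryGroup n ℂ) :=
    Continuous.subtype_mk (by fun_prop) _
  have h := (PathConnectedSpace.joined (1 : Circle) (-1)).map hcont
  convert h using 1 <;> ext1 <;> simp

section Frames

theorem exists_conj_eq_diagonal {K : Type*} [Field K] {M : Matrix n n K} {d : n → K}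
    (hd : Function.Injective d) (hM : Set.range d ⊆ spectrum K M) :
    ∃ T : (Matrix n n K)ˣ, M = T * diagonal d * (T⁻¹ : (Matrix n n K)ˣ) := by
  have heigen (i : n) : ∃ v : n → K, Module.End.HasEigenvector (toLin' M) (d i) v := by
    have hi : d i ∈ spectrum K (toLin' M) := by
      rw [spectrum_toLin']
      exact hM (Set.mem_range_self i)
    exact (Module.End.hasEigenvalue_iff_mem_spectrum.mpr hi).exists_hasEigenvector
  choose v hv using heigen
  obtain ⟨T, hT⟩ : IsUnit (of v)ᵀ := linearIndependent_cols_iff_isUnit.mp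
    (Module.End.eigenvectors_linearIndependent' (toLin' M) d hd v hv)
  refine ⟨T, (Units.eq_mul_inv_iff_mul_eq T).mpr ?_⟩
  ext i j
  rw [hT, mul_diagonal, mul_comm]
  simpa [mul_apply, mulVec, dotProduct] using congrFun (hv j).apply_eq_smul i

theorem eq_diagonal_diag_of_commute_diagonal {K : Type*} [CommRing K] [IsDomain K]
    {M : Matrix n n K} {d : n → K} (hd : Function.Injective d) (h : Commute M (diagonal d)) :
    M = diagonal M.diag := by
  ext i j
  rcases eq_or_ne i j with rfl | hij
  · rw [diagonal_apply_eq, diag_apply]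
  · have hentry := congrFun₂ h.eq i j
    rw [mul_diagonal, diagonal_mul] at hentry
    have hprod : M i j * (d j - d i) = 0 := by linear_combination hentry
    rw [diagonal_apply_ne _ hij]
    exact (mul_eq_zero.mp hprod).resolve_right (sub_ne_zero.mpr (hd.ne hij.symm))

namespace IsNormalPreserver

variable {φ : NormalMatrix n → Matrix n n ℂ} (hφ : IsNormalPreserver φ)
include hφ

theorem spectrum_conjDiagonal_subset (U : unitaryGroup n ℂ) (d : n → ℂ) :
    spectrum ℂ (φ (conjDiagonal U d)) ⊆ Set.range d :=
  (hφ.spectrum_subset _).trans (spectrum_conjDiagonal U d).subset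

theorem mem_spectrum_of_injective (U : unitaryGroup n ℂ) {d e : n → ℂ}
    (hd : Function.Injective d) (he : Function.Injective e) {i : n}
    (hi : d i ∈ spectrum ℂ (φ (conjDiagonal U d))) : e i ∈ spectrum ℂ (φ (conjDiagonal U e)) :=
  mem_spectrum_of_preconnected (S := {d : n → ℂ // Function.Injective d})
    (M := fun d ↦ φ (conjDiagonal U d))
    (hφ.continuous.comp (continuous_conjDiagonal continuous_const continuous_subtype_val))
    continuous_subtype_val Subtype.prop (fun d ↦ hφ.spectrum_conjDiagonal_subset U d)
    (s := ⟨d, hd⟩) ⟨e, he⟩ hi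

theorem mem_spectrum_swap (U : unitaryGroup n ℂ) {d : n → ℂ} (hd : Function.Injective d) {i : n}
    (j : n) (hi : d i ∈ spectrum ℂ (φ (conjDiagonal U d))) :
    d j ∈ spectrum ℂ (φ (conjDiagonal U d)) := by
  have hstar : star (unitarySwap i j) = unitarySwap i j := Subtype.ext (conjTranspose_swap i j)
  let γ := (joined_one_of_star_eq_self hstar).somePath
  have hswap : d i ∈ spectrum ℂ (φ (conjDiagonal U (d ∘ Equiv.swap i j))) := by
    have h := mem_spectrum_of_preconnected (M := fun t ↦ φ (conjDiagonal (U * γ t) d))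
      (hφ.continuous.comp
        (continuous_conjDiagonal (continuous_const.mul γ.continuous) continuous_const))
      (continuous_const (y := d)) (fun _ ↦ hd) (fun t ↦ hφ.spectrum_conjDiagonal_subset _ d)
      (s := 0) 1 (by rwa [γ.source, mul_one])
    rwa [γ.target, conjDiagonal_mul_unitarySwap] at h
  refine hφ.mem_spectrum_of_injective U (hd.comp (Equiv.swap i j).injective) hd ?_
  rwa [Function.comp_apply, Equiv.swap_apply_right]

theorem range_subset_spectrum (U : unitaryGroup n ℂ) {d : n → ℂ} (hd : Function.Injective d) :
    Set.range d ⊆ spectrum ℂ (φ (conjDiagonal U d)) := by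
  rintro _ ⟨j, rfl⟩
  have : Nonempty n := ⟨j⟩
  obtain ⟨x, hx⟩ := spectrum.nonempty_of_isAlgClosed_of_finiteDimensional ℂ (φ (conjDiagonal U d))
  obtain ⟨i, rfl⟩ := hφ.spectrum_conjDiagonal_subset U d hx
  exact hφ.mem_spectrum_swap U hd j hx

theorem exists_frame (U : unitaryGroup n ℂ) : ∃ T : (Matrix n n ℂ)ˣ,
    ∀ d, φ (conjDiagonal U d) = T * diagonal d * (T⁻¹ : (Matrix n n ℂ)ˣ) := by
  obtain ⟨d₀, hd₀⟩ := exists_injective_tuple n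
  obtain ⟨T, hT⟩ := exists_conj_eq_diagonal hd₀ (hφ.range_subset_spectrum U hd₀)
  let N (d : n → ℂ) : Matrix n n ℂ := (T⁻¹ : (Matrix n n ℂ)ˣ) * φ (conjDiagonal U d) * T
  have hN₀ : N d₀ = diagonal d₀ := by simp [N, hT, mul_assoc]
  have hφN (d : n → ℂ) : φ (conjDiagonal U d) = T * N d * (T⁻¹ : (Matrix n n ℂ)ˣ) := by
    simp [N, mul_assoc]
  have hdiag (d : n → ℂ) : N d = diagonal (N d).diag := by
    refine eq_diagonal_diag_of_commute_diagonal hd₀ ?_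
    rw [← hN₀]
    exact (hφ.commute _ _ (commute_conjDiagonal U d d₀)).map
      (MulSemiringAction.toRingEquiv _ (Matrix n n ℂ) (ConjAct.toConjAct T⁻¹))
  have hspec (d : n → ℂ) (i : n) : (N d).diag i ∈ Set.range d := by
    apply hφ.spectrum_conjDiagonal_subset U d
    rw [hφN, spectrum.units_conjugate, hdiag, spectrum_diagonal, diag_diagonal]
    exact Set.mem_range_self i
  have hcont : Continuous fun d ↦ (N d).diag :=
    ((continuous_const.matrix_mul (hφ.continuous.comp
      (continuous_conjDiagonal continuous_const continuous_id))).matrix_mul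
      continuous_const).matrix_diag
  have hinj : Set.EqOn (fun d ↦ (N d).diag) id {d | Function.Injective d} := by
    intro d hd
    ext i
    exact eq_of_preconnected_of_mem_range (S := {d : n → ℂ // Function.Injective d})
      (((continuous_apply i).comp hcont).comp continuous_subtype_val) continuous_subtype_val
      Subtype.prop (fun d ↦ hspec d i) (s := ⟨d₀, hd₀⟩) ⟨d, hd⟩ (by simp [hN₀])
  have hid := Continuous.ext_on dense_injective_tuples hcont continuous_id hinj
  refine ⟨T, fun d ↦ ?_⟩
  rw [hφN, hdiag, congrFun hid d, id]

end IsNormalPreserver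
end Frames

section OrthogonalCones

variable {𝕜 E : Type*} [RCLike 𝕜] [NormedAddCommGroup E] [InnerProductSpace 𝕜 E]

theorem exists_ne_zero_inner_eq_zero_inner_eq_zero (hdim : 3 ≤ Module.finrank 𝕜 E) (x y : E) :
    ∃ f : E, f ≠ 0 ∧ inner 𝕜 x f = 0 ∧ inner 𝕜 y f = 0 := by
  classical
  have : FiniteDimensional 𝕜 E := Module.finite_of_finrank_pos (by lia)
  let W : Submodule 𝕜 E := Submodule.span 𝕜 ({x, y} : Finset E)
  have hW : W ≠ ⊤ := by
    rintro h
    have hle : Module.finrank 𝕜 W ≤ 2 :=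
      (finrank_span_finset_le_card (R := 𝕜) ({x, y} : Finset E)).trans Finset.card_le_two
    rw [h, finrank_top] at hle
    lia
  obtain ⟨f, hf, hf0⟩ :=
    Submodule.exists_mem_ne_zero_of_ne_bot (mt Submodule.orthogonal_eq_bot_iff.mp hW)
  rw [Submodule.mem_orthogonal] at hf
  exact ⟨f, hf0, hf x (Submodule.subset_span (by simp)), hf y (Submodule.subset_span (by simp))⟩

variable {K : Set E} {e : E} (hsmul : ∀ (c : 𝕜), ∀ z ∈ K, c • z ∈ K)
include hsmul

theorem exists_mem_cone_norm_inner_le (hcompact : IsCompact (K ∩ Metric.sphere 0 1)) {z : E}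
    (hz : z ∈ K) (hez : inner 𝕜 e z ≠ 0) : ∃ a ∈ K, ‖a‖ = 1 ∧ inner 𝕜 e a ≠ 0 ∧
      ∀ w ∈ K, ‖inner 𝕜 e w‖ ≤ ‖inner 𝕜 e a‖ * ‖w‖ := by
  have hunit {z : E} (hz : z ∈ K) (hz0 : z ≠ 0) : (‖z‖⁻¹ : 𝕜) • z ∈ K ∩ Metric.sphere 0 1 :=
    ⟨hsmul _ z hz, by simpa using norm_smul_inv_norm (𝕜 := 𝕜) hz0⟩
  have hz0 : z ≠ 0 := fun h ↦ hez (by rw [h, inner_zero_right])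
  obtain ⟨a, ⟨haK, ha⟩, hmax⟩ := hcompact.exists_isMaxOn ⟨_, hunit hz hz0⟩
    (continuous_const.inner continuous_id).norm.continuousOn (f := fun z ↦ ‖inner 𝕜 e z‖)
  have hbound (w : E) (hw : w ∈ K) : ‖inner 𝕜 e w‖ ≤ ‖inner 𝕜 e a‖ * ‖w‖ := by
    rcases eq_or_ne w 0 with rfl | hw0
    · simp
    · have h := hmax (hunit hw hw0)
      simp only [Set.mem_ofPred_eq, inner_smul_right, norm_mul, norm_inv, RCLike.norm_ofReal,
        abs_norm] at h
      rwa [inv_mul_le_iff₀ (norm_pos_iff.mpr hw0), mul_comm] at h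
  refine ⟨a, haK, mem_sphere_zero_iff_norm.mp ha, fun h ↦ hez ?_, hbound⟩
  simpa only [h, norm_zero, zero_mul, norm_le_zero_iff] using hbound z hz

variable (hadd : ∀ p ∈ K, ∀ q ∈ K, inner 𝕜 p q = 0 → p + q ∈ K)
  (horth : ∀ z, inner 𝕜 e z = 0 → z ∈ K) (he : e ∉ K)
include hadd horth he

theorem exists_mem_cone_inner_eq_zero (hdim : 3 ≤ Module.finrank 𝕜 E) {z : E} (hz : z ∈ K)
    (hnorm : ‖z‖ = 1) (hez : inner 𝕜 e z ≠ 0) :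
    ∃ w ∈ K, inner 𝕜 z w = 0 ∧ inner 𝕜 e w = inner 𝕜 e z := by
  have he0 : inner 𝕜 e e ≠ 0 := fun h ↦ he (horth e h)
  let m : 𝕜 := inner 𝕜 e z / inner 𝕜 e e
  have hm : m ≠ 0 := div_ne_zero hez he0
  let y : E := z - m • e
  have hey : inner 𝕜 e y = 0 := by
    rw [inner_sub_right, inner_smul_right, div_mul_cancel₀ _ he0, sub_self]
  have hy0 : inner 𝕜 y y ≠ 0 := by
    refine inner_self_ne_zero.mpr fun hy ↦ he ?_
    rw [← inv_smul_smul₀ hm e, ← sub_eq_zero.mp hy]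
    exact hsmul _ z hz
  have hz_eq : z = m • e + y := (add_sub_cancel _ _).symm
  obtain ⟨f, hf, hef, hyf⟩ := exists_ne_zero_inner_eq_zero_inner_eq_zero hdim e y
  have hf0 : inner 𝕜 f f ≠ 0 := inner_self_ne_zero.mpr hf
  have hzf : inner 𝕜 z f = 0 := by
    rw [hz_eq, inner_add_left, inner_smul_left, hef, hyf, mul_zero, add_zero]
  have hzy : inner 𝕜 z y = inner 𝕜 y y := by
    conv_lhs => rw [hz_eq]
    rw [inner_add_left, inner_smul_left, hey, mul_zero, zero_add]
  let g : E := (inner 𝕜 f f)⁻¹ • f - (inner 𝕜 y y)⁻¹ • y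
  have heg : inner 𝕜 e g = 0 := by
    rw [inner_sub_right, inner_smul_right, inner_smul_right, hef, hey, mul_zero, mul_zero, sub_zero]
  have hzg : inner 𝕜 z g = -1 := by
    rw [inner_sub_right, inner_smul_right, inner_smul_right, hzf, hzy, inv_mul_cancel₀ hy0,
      mul_zero, zero_sub]
  have hfg : inner 𝕜 f g = 1 := by
    rw [inner_sub_right, inner_smul_right, inner_smul_right, inner_eq_zero_symm.mp hyf,
      inv_mul_cancel₀ hf0, mul_zero, sub_zero]
  refine ⟨z + f + g, hadd _ (hadd z hz f (horth f hef) hzf) g (horth g heg) ?_, ?_, ?_⟩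
  · rw [inner_add_left, hzg, hfg, neg_add_cancel]
  · rw [inner_add_right, inner_add_right, hzf, hzg, inner_self_eq_norm_sq_to_K, hnorm]
    simp
  · rw [inner_add_right, inner_add_right, hef, heg, add_zero, add_zero]

-- A unit vector of `K` with maximal overlap with `e` would have an orthogonal companion in `K`
-- also overlapping with `e`, and the projection of `e` onto their span would overlap even more.
theorem inner_eq_zero_of_mem_cone (hdim : 3 ≤ Module.finrank 𝕜 E)
    (hcompact : IsCompact (K ∩ Metric.sphere 0 1)) {z : E} (hz : z ∈ K) : inner 𝕜 e z = 0 := by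
  by_contra hez
  obtain ⟨a, haK, ha, hea, hbound⟩ := exists_mem_cone_norm_inner_le hsmul hcompact hz hez
  obtain ⟨b, hbK, hab, heb⟩ := exists_mem_cone_inner_eq_zero hsmul hadd horth he hdim haK ha hea
  have hb : 0 < ‖b‖ := norm_pos_iff.mpr fun h ↦ hea (by rw [← heb, h, inner_zero_right])
  let t : ℝ := (‖b‖ ^ 2)⁻¹
  have ht : 0 < t := by positivity
  have hatb : inner 𝕜 a ((t : 𝕜) • b) = 0 := by rw [inner_smul_right, hab, mul_zero]
  have hnorm : ‖a + (t : 𝕜) • b‖ ^ 2 = 1 + t := by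
    rw [@norm_add_sq 𝕜, hatb, ha, norm_smul, RCLike.norm_ofReal, abs_of_pos ht]
    simp only [t, map_zero]
    field_simp
    ring
  have hoverlap : ‖inner 𝕜 e (a + (t : 𝕜) • b)‖ = ‖inner 𝕜 e a‖ * (1 + t) := by
    rw [inner_add_right, inner_smul_right, heb, ← one_add_mul, mul_comm, norm_mul]
    norm_cast
    rw [abs_of_pos (by linarith)]
  have hle := hbound _ (hadd a haK _ (hsmul _ b hbK) hatb)
  rw [hoverlap] at hle
  have := le_of_mul_le_mul_left hle (norm_pos_iff.mpr hea)
  nlinarith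

end OrthogonalCones

theorem exists_orthonormalBasis_extending {𝕜 E ι m : Type*} [RCLike 𝕜] [NormedAddCommGroup E]
    [InnerProductSpace 𝕜 E] [FiniteDimensional 𝕜 E] [Fintype ι]
    (hcard : Module.finrank 𝕜 E = Fintype.card ι) {v : m → E} (hv0 : ∀ k, v k ≠ 0)
    (hv : Pairwise fun k l ↦ inner 𝕜 (v k) (v l) = 0) :
    ∃ (b : OrthonormalBasis ι 𝕜 E) (f : m ↪ ι), ∀ k, ∃ c : 𝕜, c ≠ 0 ∧ b (f k) = c • v k := by
  let w : m → E := fun k ↦ (‖v k‖⁻¹ : 𝕜) • v k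
  have hw : Orthonormal 𝕜 w := by
    refine ⟨fun k ↦ norm_smul_inv_norm (hv0 k), fun k l hkl ↦ ?_⟩
    simp only [w, inner_smul_left, inner_smul_right, hv hkl, mul_zero]
  have := hw.linearIndependent.finite
  have := Fintype.ofFinite m
  obtain ⟨f⟩ : Nonempty (m ↪ ι) := Function.Embedding.nonempty_of_card_le
    (hcard ▸ hw.linearIndependent.fintype_card_le_finrank)
  have hext (k : m) : Function.extend f w 0 (f k) = w k := f.injective.extend_apply w 0 k
  have horth : Orthonormal 𝕜 ((Set.range f).domRestrict (Function.extend f w 0)) := by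
    let σ := Equiv.ofInjective f f.injective
    convert hw.comp σ.symm σ.symm.injective using 1
    ext1 i
    obtain ⟨k, rfl⟩ := σ.surjective i
    rw [Function.comp_apply, σ.symm_apply_apply]
    exact hext k
  obtain ⟨b, hb⟩ := horth.exists_orthonormalBasis_extension_of_card_eq hcard
  refine ⟨b, f, fun k ↦ ⟨(‖v k‖⁻¹ : 𝕜), ?_, (hb _ (Set.mem_range_self k)).trans (hext k)⟩⟩
  exact inv_ne_zero (RCLike.ofReal_ne_zero.mpr (norm_ne_zero_iff.mpr (hv0 k)))

/-- A map assigning to each nonzero vector of `ℂⁿ` a projection depending only on, and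
continuously on, the line it spans, such that every orthonormal basis is sent to the coordinate
projections of some frame of `ℂⁿ`. Vectors rather than lines are used as arguments, with `0`
sent to `0`. -/
structure IsFrameMap (ψ : EuclideanSpace ℂ n → Matrix n n ℂ) : Prop where
  continuousAt : ∀ u, u ≠ 0 → ContinuousAt ψ u
  map_zero : ψ 0 = 0
  map_smul : ∀ (c : ℂ) (u : EuclideanSpace ℂ n), c ≠ 0 → ψ (c • u) = ψ u
  exists_frame : ∀ b : OrthonormalBasis n ℂ (EuclideanSpace ℂ n), ∃ T : (Matrix n n ℂ)ˣ,
    ∀ i, ψ (b i) = T * single i i (1 : ℂ) * (T⁻¹ : (Matrix n n ℂ)ˣ)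

namespace IsFrameMap

variable {ψ : EuclideanSpace ℂ n → Matrix n n ℂ} (hψ : IsFrameMap ψ)
include hψ

theorem units_conj (S : (Matrix n n ℂ)ˣ) :
    IsFrameMap fun u ↦ (S : Matrix n n ℂ) * ψ u * (S⁻¹ : (Matrix n n ℂ)ˣ) where
  continuousAt u hu := (continuousAt_const.mul (hψ.continuousAt u hu)).mul continuousAt_const
  map_zero := by rw [hψ.map_zero, mul_zero, zero_mul]
  map_smul c u hc := by rw [hψ.map_smul c u hc]
  exists_frame b := by
    obtain ⟨T, hT⟩ := hψ.exists_frame b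
    refine ⟨S * T, fun i ↦ ?_⟩
    simp only [hT, _root_.mul_inv_rev, Units.val_mul, mul_assoc]

theorem transpose : IsFrameMap fun u ↦ (ψ u)ᵀ where
  continuousAt u hu := (continuous_id.matrix_transpose.continuousAt).comp (hψ.continuousAt u hu)
  map_zero := by rw [hψ.map_zero, transpose_zero]
  map_smul c u hc := by rw [hψ.map_smul c u hc]
  exists_frame b := by
    obtain ⟨T, hT⟩ := hψ.exists_frame b
    refine ⟨⟨((T⁻¹ : (Matrix n n ℂ)ˣ) : Matrix n n ℂ)ᵀ, (T : Matrix n n ℂ)ᵀ, ?_, ?_⟩, fun i ↦ ?_⟩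
    · rw [← transpose_mul, Units.mul_inv, transpose_one]
    · rw [← transpose_mul, Units.inv_mul, transpose_one]
    · rw [hT, transpose_mul, transpose_mul, transpose_single, ← mul_assoc]
      rfl

theorem exists_eq_vecMulVec {u : EuclideanSpace ℂ n} (hu : u ≠ 0) :
    ∃ ξ η : n → ℂ, ψ u = vecMulVec ξ η ∧ η ⬝ᵥ ξ = 1 := by
  obtain ⟨b, f, h⟩ := exists_orthonormalBasis_extending (𝕜 := ℂ) finrank_euclideanSpace
    (v := fun _ : Unit ↦ u) (fun _ ↦ hu) Subsingleton.pairwise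
  obtain ⟨c, hc, hb⟩ := h ()
  obtain ⟨T, hT⟩ := hψ.exists_frame b
  let S : Matrix n n ℂ := (T⁻¹ : (Matrix n n ℂ)ˣ)
  refine ⟨T.val *ᵥ Pi.single (f ()) 1, Pi.single (f ()) 1 ᵥ* S, ?_, ?_⟩
  · rw [← hψ.map_smul c u hc, ← hb, hT, single_eq_single_vecMulVec_single, mul_vecMulVec,
      vecMulVec_mul]
  · rw [dotProduct_mulVec, vecMul_vecMul, Units.inv_mul, vecMul_one, single_one_dotProduct,
      Pi.single_eq_same]

theorem mul_self (u : EuclideanSpace ℂ n) : ψ u * ψ u = ψ u := by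
  rcases eq_or_ne u 0 with rfl | hu
  · rw [hψ.map_zero, mul_zero]
  · obtain ⟨ξ, η, h, hηξ⟩ := hψ.exists_eq_vecMulVec hu
    rw [h, vecMulVec_mul_vecMulVec, hηξ, one_smul]

theorem map_ne_zero {u : EuclideanSpace ℂ n} (hu : u ≠ 0) : ψ u ≠ 0 := by
  intro h0
  obtain ⟨ξ, η, h, hηξ⟩ := hψ.exists_eq_vecMulVec hu
  rw [h0, eq_comm, vecMulVec_eq_zero] at h
  rcases h with rfl | rfl <;> simp at hηξ

theorem mul_eq_zero_of_inner_eq_zero {u v : EuclideanSpace ℂ n} (huv : inner ℂ u v = 0) :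
    ψ u * ψ v = 0 := by
  rcases eq_or_ne u 0 with rfl | hu
  · rw [hψ.map_zero, zero_mul]
  rcases eq_or_ne v 0 with rfl | hv
  · rw [hψ.map_zero, mul_zero]
  obtain ⟨b, f, h⟩ := exists_orthonormalBasis_extending (𝕜 := ℂ) finrank_euclideanSpace
    (v := ![u, v]) (by simp [Fin.forall_fin_two, hu, hv])
    (by simp [Pairwise, Fin.forall_fin_two, huv, inner_eq_zero_symm.mp huv])
  obtain ⟨c, hc, hbu⟩ : ∃ c : ℂ, c ≠ 0 ∧ b (f 0) = c • u := h 0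
  obtain ⟨d, hd, hbv⟩ : ∃ d : ℂ, d ≠ 0 ∧ b (f 1) = d • v := h 1
  obtain ⟨T, hT⟩ := hψ.exists_frame b
  rw [← hψ.map_smul c u hc, ← hψ.map_smul d v hd, ← hbu, ← hbv, hT, hT]
  have hf : f 0 ≠ f 1 := f.injective.ne zero_ne_one
  simp only [mul_assoc, Units.inv_mul_cancel_left]
  rw [← mul_assoc (single _ _ _), single_mul_single_of_ne _ _ _ _ hf, zero_mul, mul_zero]

theorem sum_map_basis (b : OrthonormalBasis n ℂ (EuclideanSpace ℂ n)) : ∑ i, ψ (b i) = 1 := by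
  obtain ⟨T, hT⟩ := hψ.exists_frame b
  simp only [hT]
  rw [← Finset.sum_mul, ← Finset.mul_sum, sum_single_one, mul_one, Units.mul_inv]

theorem mul_map_eq_zero (b : OrthonormalBasis n ℂ (EuclideanSpace ℂ n)) {A : Matrix n n ℂ}
    {u : EuclideanSpace ℂ n} (h : ∀ i, A * ψ (b i) = 0 ∨ inner ℂ (b i) u = 0) : A * ψ u = 0 := by
  rw [← one_mul (ψ u), ← hψ.sum_map_basis b, Finset.sum_mul, Finset.mul_sum]
  refine Finset.sum_eq_zero fun i _ ↦ ?_
  rcases h i with hA | hi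
  · rw [← mul_assoc, hA, zero_mul]
  · rw [hψ.mul_eq_zero_of_inner_eq_zero hi, mul_zero]

theorem mul_map_add_eq_zero {A : Matrix n n ℂ} {p q : EuclideanSpace ℂ n}
    (hpq : inner ℂ p q = 0) (hp : A * ψ p = 0) (hq : A * ψ q = 0) : A * ψ (p + q) = 0 := by
  rcases eq_or_ne p 0 with rfl | hp0
  · rwa [zero_add]
  rcases eq_or_ne q 0 with rfl | hq0
  · rwa [add_zero]
  obtain ⟨b, f, h⟩ := exists_orthonormalBasis_extending (𝕜 := ℂ) finrank_euclideanSpace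
    (v := ![p, q]) (by simp [Fin.forall_fin_two, hp0, hq0])
    (by simp [Pairwise, Fin.forall_fin_two, hpq, inner_eq_zero_symm.mp hpq])
  obtain ⟨c, hc, hbp⟩ : ∃ c : ℂ, c ≠ 0 ∧ b (f 0) = c • p := h 0
  obtain ⟨d, hd, hbq⟩ : ∃ d : ℂ, d ≠ 0 ∧ b (f 1) = d • q := h 1
  refine hψ.mul_map_eq_zero b fun i ↦ or_iff_not_imp_left.mpr fun hi ↦ ?_
  have hip : i ≠ f 0 := by
    rintro rfl
    exact hi (by rw [hbp, hψ.map_smul c p hc, hp])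
  have hiq : i ≠ f 1 := by
    rintro rfl
    exact hi (by rw [hbq, hψ.map_smul d q hd, hq])
  have hbip : inner ℂ (b i) (b (f 0)) = 0 := b.orthonormal.2 hip
  have hbiq : inner ℂ (b i) (b (f 1)) = 0 := b.orthonormal.2 hiq
  rw [hbp, inner_smul_right, mul_eq_zero_iff_left hc] at hbip
  rw [hbq, inner_smul_right, mul_eq_zero_iff_left hd] at hbiq
  rw [inner_add_right, hbip, hbiq, add_zero]

theorem mul_eq_zero_iff (hn : 3 ≤ Fintype.card n) {u v : EuclideanSpace ℂ n} :
    ψ u * ψ v = 0 ↔ inner ℂ u v = 0 := by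
  refine ⟨fun h ↦ ?_, hψ.mul_eq_zero_of_inner_eq_zero⟩
  rcases eq_or_ne u 0 with rfl | hu
  · exact inner_zero_left v
  have hcompact : IsCompact ({z | ψ u * ψ z = 0} ∩ Metric.sphere 0 1) := by
    have hcont : ContinuousOn (fun z ↦ ψ u * ψ z) (Metric.sphere 0 1) := fun z hz ↦
      have hz0 : z ≠ 0 := ne_zero_of_mem_unit_sphere ⟨z, hz⟩
      (continuousAt_const.mul (hψ.continuousAt z hz0)).continuousWithinAt
    rw [Set.inter_comm]
    exact (isCompact_sphere 0 1).of_isClosed_subset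
      (hcont.preimage_isClosed_of_isClosed Metric.isClosed_sphere isClosed_singleton)
      Set.inter_subset_left
  refine inner_eq_zero_of_mem_cone (K := {z | ψ u * ψ z = 0}) (fun c z hz ↦ ?_)
    (fun p hp q hq hpq ↦ hψ.mul_map_add_eq_zero hpq hp hq)
    (fun z ↦ hψ.mul_eq_zero_of_inner_eq_zero) (fun hmem ↦ hψ.map_ne_zero hu ?_)
    (hn.trans_eq finrank_euclideanSpace.symm) hcompact h
  · rcases eq_or_ne c 0 with rfl | hc
    · rw [zero_smul, Set.mem_ofPred_eq, hψ.map_zero, mul_zero]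
    · rwa [Set.mem_ofPred_eq, hψ.map_smul c z hc]
  · rw [← hψ.mul_self u, hmem]

end IsFrameMap

section FunctionalEquation

variable {K L : Type*} [Field K] [Field L] {g₁ f₁ g₂ f₂ : K → L}

theorem mul_eq_mul_one_of_functional_equation
    (H : ∀ a b c d, 1 + a * c + b * d = 0 ↔ 1 + g₁ a * f₁ c + g₂ b * f₂ d = 0) (a c : K) :
    g₁ a * f₁ c = g₁ (a * c) * f₁ 1 := by
  have hac := (H a (-1 - a * c) c 1).mp (by ring)
  have hac' := (H (a * c) (-1 - a * c) 1 1).mp (by ring)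
  linear_combination hac - hac'

theorem exists_monoidHom_of_functional_equation [NeZero (2 : K)]
    (H : ∀ a b c d, 1 + a * c + b * d = 0 ↔ 1 + g₁ a * f₁ c + g₂ b * f₂ d = 0) (h₂ : f₂ 0 = 0) :
    ∃ F : K →* L, F (-1) = -1 ∧ ∀ a c, g₁ a * f₁ c = F (a * c) := by
  have hdep := mul_eq_mul_one_of_functional_equation H
  have hneg : g₁ (-1) * f₁ 1 = -1 := by
    linear_combination (H (-1) 0 1 0).mp (by ring) - g₂ 0 * h₂
  have hmul (x y : K) : g₁ (x * y) * f₁ 1 * (g₁ 1 * f₁ 1) = g₁ x * f₁ 1 * (g₁ y * f₁ 1) := by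
    rw [← hdep, ← one_mul y, ← hdep 1 y, one_mul]
    ring
  have hone : g₁ 1 * f₁ 1 = 1 := by
    have hsq := hmul (-1) (-1)
    rw [hneg, neg_mul_neg, neg_mul_neg, one_mul, one_mul] at hsq
    refine (mul_self_eq_one_iff.mp hsq).resolve_right fun h ↦ two_ne_zero (α := K) ?_
    linear_combination (H 1 0 1 0).mpr (by linear_combination h + g₂ 0 * h₂)
  refine ⟨⟨⟨fun x ↦ g₁ x * f₁ 1, hone⟩, fun x y ↦ ?_⟩, hneg, hdep⟩
  have h := hmul x y
  rwa [hone, mul_one] at h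

theorem exists_ringHom_of_functional_equation [NeZero (2 : K)]
    (H : ∀ a b c d, 1 + a * c + b * d = 0 ↔ 1 + g₁ a * f₁ c + g₂ b * f₂ d = 0)
    (h₁ : f₁ 0 = 0) (h₂ : f₂ 0 = 0) :
    ∃ F : K →+* L, ∀ a c, g₁ a * f₁ c = F (a * c) ∧ g₂ a * f₂ c = F (a * c) := by
  obtain ⟨F₁, hF₁, hgf₁⟩ := exists_monoidHom_of_functional_equation H h₂
  obtain ⟨F₂, hF₂, hgf₂⟩ := exists_monoidHom_of_functional_equation (g₁ := g₂) (g₂ := g₁)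
    (fun a b c d ↦ by rw [add_right_comm, H, add_right_comm]) h₁
  have hline (x y : K) : 1 + x + y = 0 ↔ 1 + F₁ x + F₂ y = 0 := by
    simpa [hgf₁, hgf₂] using H x y 1 1
  have hzero₁ : F₁ 0 = 0 := by rw [← mul_zero 0, ← hgf₁, h₁, mul_zero]
  have hzero₂ : F₂ 0 = 0 := by rw [← mul_zero 0, ← hgf₂, h₂, mul_zero]
  have hsucc (x : K) : F₂ (1 + x) = 1 + F₁ x := by
    have h := (hline x (-1 * (1 + x))).mp (by ring)
    rw [map_mul, hF₂] at h
    linear_combination -h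
  have heq (x : K) : F₁ x = F₂ x := by
    rcases eq_or_ne x 0 with rfl | hx
    · rw [hzero₁, hzero₂]
    have hfactor : F₂ (1 + x) = F₂ x * (1 + F₁ x⁻¹) := by
      rw [← hsucc, ← map_mul, mul_add, mul_one, mul_inv_cancel₀ hx, add_comm]
    have hinv : F₁ x * F₁ x⁻¹ = 1 := by rw [← map_mul, mul_inv_cancel₀ hx, map_one]
    have hprod : (1 + F₁ x) * (F₁ x - F₂ x) = 0 := by
      linear_combination F₁ x * (hfactor - hsucc x) + F₂ x * hinv
    rcases mul_eq_zero.mp hprod with h | h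
    · have hx1 : x = -1 := by
        linear_combination (hline x 0).mpr (by rw [hzero₂, h, add_zero])
      rw [hx1, hF₁, hF₂]
    · exact sub_eq_zero.mp h
  have hadd (x y : K) : F₁ (x + y) = F₁ x + F₁ y := by
    rcases eq_or_ne x 0 with rfl | hx
    · rw [hzero₁, zero_add, zero_add]
    · rw [← mul_div_cancel₀ y hx, ← mul_one_add, map_mul, heq (1 + _), hsucc, map_mul, mul_one_add]
  exact ⟨⟨F₁, hzero₁, hadd⟩, fun a c ↦ ⟨hgf₁ a c, (hgf₂ a c).trans (heq _).symm⟩⟩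

end FunctionalEquation

section LineProjection

/-- The orthogonal projection `u u* / ⟨u, u⟩` onto the line spanned by `u`, equal to `0` for
`u = 0`. -/
noncomputable def lineProjection (u : EuclideanSpace ℂ n) : NormalMatrix n :=
  ⟨(inner ℂ u u)⁻¹ • vecMulVec u.ofLp (star u.ofLp), by
    rw [conjTranspose_smul, conjTranspose_vecMulVec, star_star, smul_mul_smul_comm,
      smul_mul_smul_comm, mul_comm]⟩

theorem coe_lineProjection (u : EuclideanSpace ℂ n) :
    (lineProjection u : Matrix n n ℂ) = (inner ℂ u u)⁻¹ • vecMulVec u.ofLp (star u.ofLp) := rfl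

theorem transpose_lineProjection (u : EuclideanSpace ℂ n) :
    (lineProjection u).valᵀ = (lineProjection u).val.map star := by
  have hreal : star (inner ℂ u u) = inner ℂ u u := inner_conj_symm u u
  ext i j
  simp only [coe_lineProjection, transpose_apply, map_apply, Matrix.smul_apply, smul_eq_mul,
    vecMulVec_apply, Pi.star_apply, star_mul', star_inv₀, hreal, star_star]
  ring

theorem lineProjection_smul (u : EuclideanSpace ℂ n) {c : ℂ} (hc : c ≠ 0) :
    lineProjection (c • u) = lineProjection u := by
  have hc' : star c ≠ 0 := star_ne_zero.mpr hc
  refine Subtype.ext ?_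
  rw [coe_lineProjection, coe_lineProjection, inner_smul_left, inner_smul_right, WithLp.ofLp_smul,
    star_smul, smul_vecMulVec, vecMulVec_smul, smul_smul, smul_smul, ← Complex.star_def]
  congr 1
  field_simp

theorem continuousAt_lineProjection {u : EuclideanSpace ℂ n} (hu : u ≠ 0) :
    ContinuousAt lineProjection u := by
  have hcoord : Continuous fun v : EuclideanSpace ℂ n ↦ v.ofLp := PiLp.continuous_ofLp 2 _
  refine Topology.IsInducing.subtypeVal.continuousAt_iff.mpr ?_
  have hinner : Continuous fun v : EuclideanSpace ℂ n ↦ inner ℂ v v :=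
    continuous_id.inner continuous_id
  exact (hinner.continuousAt.inv₀ (inner_self_ne_zero.mpr hu)).smul
    (hcoord.matrix_vecMulVec hcoord.star).continuousAt

theorem lineProjection_basis (b : OrthonormalBasis n ℂ (EuclideanSpace ℂ n)) (i : n) :
    lineProjection (b i) = conjDiagonal (basisUnitary b) (Pi.single i 1) := by
  refine eq_conjDiagonal_of_eigenvectors fun j ↦ ?_
  rw [coe_lineProjection, smul_mulVec, vecMulVec_mulVec, op_smul_eq_smul, dotProduct_comm,
    ← EuclideanSpace.inner_eq_star_dotProduct, b.inner_eq_one, inv_one, one_smul,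
    b.inner_eq_ite, Pi.single_apply]
  rcases eq_or_ne i j with rfl | hij
  · simp only [if_true]
  · simp only [hij, hij.symm, if_false, zero_smul]

theorem mul_diagonal_mul_eq_sum {K : Type*} [CommSemiring K] (A B : Matrix n n K) (d : n → K) :
    A * diagonal d * B = ∑ i, d i • (A * diagonal (Pi.single i 1) * B) := by
  rw [← sum_single_eq_diagonal, Matrix.mul_sum, Matrix.sum_mul]
  refine Finset.sum_congr rfl fun i _ ↦ ?_
  rw [diagonal_single, ← smul_mul_assoc, ← mul_smul_comm, smul_single, smul_eq_mul, mul_one]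

end LineProjection

section Coordinates

/-- A frame map sending the standard basis to the coordinate projections. -/
structure IsStandardFrameMap (ψ : EuclideanSpace ℂ n → Matrix n n ℂ) : Prop
    extends IsFrameMap ψ where
  map_single : ∀ i, ψ (EuclideanSpace.single i 1) = single i i 1

/-- The `j`-th affine coordinate, in the chart where the `o`-th coordinate is `1`, of the line onto
which `ψ u` projects. It is only meaningful if `ψ u o o ≠ 0`. -/
noncomputable def slope (ψ : EuclideanSpace ℂ n → Matrix n n ℂ) (o : n) (u : EuclideanSpace ℂ n) :
    n → ℂ :=
  fun j ↦ ψ u j o / ψ u o o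

/-- The `slope` of the transposed map, which gives the affine coordinates of the functional
`η` with `ψ v = ξ ηᵀ`. -/
noncomputable abbrev coslope (ψ : EuclideanSpace ℂ n → Matrix n n ℂ) (o : n) :
    EuclideanSpace ℂ n → n → ℂ :=
  slope (fun v ↦ (ψ v)ᵀ) o

/-- The vector whose `o`-th coordinate is `1` and whose other coordinates are those of `x`. -/
noncomputable def affinePoint (o : n) (x : n → ℂ) : EuclideanSpace ℂ n :=
  WithLp.toLp 2 (Function.update x o 1)

omit [Fintype n] in
theorem affinePoint_self (o : n) (x : n → ℂ) : affinePoint o x o = 1 := Function.update_self o 1 x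

omit [Fintype n] in
theorem affinePoint_of_ne {o j : n} (h : j ≠ o) (x : n → ℂ) : affinePoint o x j = x j :=
  Function.update_of_ne h 1 x

namespace IsStandardFrameMap

variable {ψ : EuclideanSpace ℂ n → Matrix n n ℂ} {o : n} (hψ : IsStandardFrameMap ψ)
  (hn : 3 ≤ Fintype.card n)
include hψ

theorem transpose : IsStandardFrameMap fun u ↦ (ψ u)ᵀ where
  toIsFrameMap := hψ.toIsFrameMap.transpose
  map_single i := by rw [hψ.map_single, transpose_single]

theorem apply_eq_zero {u : EuclideanSpace ℂ n} {i : n} (hi : u i = 0) (j : n) : ψ u i j = 0 := by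
  have h : ψ (EuclideanSpace.single i 1) * ψ u = 0 := hψ.mul_eq_zero_of_inner_eq_zero (by
    rw [EuclideanSpace.inner_single_left, hi, mul_zero])
  rw [hψ.map_single] at h
  simpa using congrFun₂ h i j

theorem apply_mul_apply (u : EuclideanSpace ℂ n) (i j k l : n) :
    ψ u i j * ψ u k l = ψ u i l * ψ u k j := by
  rcases eq_or_ne u 0 with rfl | hu
  · simp only [hψ.map_zero, Matrix.zero_apply, zero_mul]
  · obtain ⟨ξ, η, h, -⟩ := hψ.exists_eq_vecMulVec hu
    simp only [h, vecMulVec_apply]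
    ring

theorem eq_smul_vecMulVec_slope {u : EuclideanSpace ℂ n} (ho : ψ u o o ≠ 0) :
    ψ u = ψ u o o • vecMulVec (slope ψ o u) (coslope ψ o u) := by
  ext i j
  simp only [Matrix.smul_apply, vecMulVec_apply, coslope, slope, transpose_apply, smul_eq_mul]
  have h := hψ.apply_mul_apply u i j o o
  field_simp
  linear_combination h

include hn

theorem exists_apply_ne_zero {u : EuclideanSpace ℂ n} {i : n} (hi : u i ≠ 0) :
    ∃ j, ψ u i j ≠ 0 := by
  by_contra! hrow
  have hmul : ψ (EuclideanSpace.single i 1) * ψ u = 0 := by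
    rw [hψ.map_single]
    ext a b
    rcases eq_or_ne a i with rfl | ha
    · rw [single_mul_apply_same, hrow, mul_zero, Matrix.zero_apply]
    · rw [single_mul_apply_of_ne _ _ _ _ _ ha, Matrix.zero_apply]
  rw [hψ.mul_eq_zero_iff hn, EuclideanSpace.inner_single_left, map_one, one_mul] at hmul
  exact hi hmul

theorem apply_self_ne_zero {u : EuclideanSpace ℂ n} {i : n} (hi : u i ≠ 0) : ψ u i i ≠ 0 := by
  obtain ⟨j, hj⟩ := hψ.exists_apply_ne_zero hn hi
  obtain ⟨k, hk⟩ : ∃ k, ψ u k i ≠ 0 := hψ.transpose.exists_apply_ne_zero hn hi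
  have h := hψ.apply_mul_apply u i i k j
  exact left_ne_zero_of_mul (h ▸ mul_ne_zero hj hk)

theorem slope_self {u : EuclideanSpace ℂ n} (ho : u o = 1) : slope ψ o u o = 1 :=
  div_self (hψ.apply_self_ne_zero hn (ho.trans_ne one_ne_zero))

theorem coslope_self {u : EuclideanSpace ℂ n} (ho : u o = 1) : coslope ψ o u o = 1 :=
  hψ.transpose.slope_self hn ho

-- For `w = -c̄ eₒ + eⱼ`, orthogonal to `u` when `uₒ = 1` and `uⱼ = c`, the relation
-- `ψ w * ψ u = 0` expresses the slope of `u` in terms of `ψ w`, hence of `c`, alone.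
theorem slope_eq_of_apply_eq {u v : EuclideanSpace ℂ n} {j : n} (hu : u o = 1) (hv : v o = 1)
    (huv : u j = v j) : slope ψ o u j = slope ψ o v j := by
  rcases eq_or_ne j o with rfl | hj
  · rw [hψ.slope_self hn hu, hψ.slope_self hn hv]
  let w : EuclideanSpace ℂ n := EuclideanSpace.single o (-star (u j)) + EuclideanSpace.single j 1
  have hwj : ψ w j j ≠ 0 := hψ.apply_self_ne_zero hn (by simp [w, hj])
  have hw (i : n) (hi : i ≠ o ∧ i ≠ j) : ψ w j i = 0 :=
    hψ.transpose.apply_eq_zero (by simp [w, hi.1, hi.2]) j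
  have hslope (v : EuclideanSpace ℂ n) (hv : v o = 1) (huv : u j = v j) :
      slope ψ o v j = -(ψ w j o / ψ w j j) := by
    have hvo : ψ v o o ≠ 0 := hψ.apply_self_ne_zero hn (hv.trans_ne one_ne_zero)
    have hinner : inner ℂ w v = 0 := by
      simp [w, EuclideanSpace.inner_single_left, hv, huv]
    have hentry := congrFun₂ (hψ.mul_eq_zero_of_inner_eq_zero hinner) j o
    rw [mul_apply, Fintype.sum_eq_add o j hj.symm fun i hi ↦ by rw [hw i hi, zero_mul],
      Matrix.zero_apply] at hentry
    rw [slope]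
    field_simp
    linear_combination hentry
  rw [hslope u hu rfl, hslope v hv huv]

theorem inner_eq_zero_iff {u v : EuclideanSpace ℂ n} (hu : u o = 1) (hv : v o = 1) :
    inner ℂ v u = 0 ↔ coslope ψ o v ⬝ᵥ slope ψ o u = 0 := by
  have huo : ψ u o o ≠ 0 := hψ.apply_self_ne_zero hn (hu.trans_ne one_ne_zero)
  have hvo : ψ v o o ≠ 0 := hψ.apply_self_ne_zero hn (hv.trans_ne one_ne_zero)
  have hleft : slope ψ o v ≠ 0 := Function.ne_iff.mpr ⟨o, by simp [hψ.slope_self hn hv]⟩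
  have hright : coslope ψ o u ≠ 0 :=
    Function.ne_iff.mpr ⟨o, by simp [hψ.transpose.slope_self hn hu]⟩
  rw [← hψ.mul_eq_zero_iff hn, hψ.eq_smul_vecMulVec_slope huo, hψ.eq_smul_vecMulVec_slope hvo,
    smul_mul_smul_comm, vecMulVec_mul_vecMulVec, smul_eq_zero_iff_right (mul_ne_zero hvo huo),
    vecMulVec_eq_zero, smul_eq_zero]
  tauto

end IsStandardFrameMap
end Coordinates

section Reconstruction

theorem sum_eq_add_add {ι M : Type*} [Fintype ι] [AddCommMonoid M] {f : ι → M} {i j k : ι}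
    (hij : i ≠ j) (hik : i ≠ k) (hjk : j ≠ k) (h : ∀ l, l ≠ i → l ≠ j → l ≠ k → f l = 0) :
    ∑ l, f l = f i + f j + f k := by
  classical
  rw [← Finset.sum_subset (Finset.subset_univ {i, j, k}) fun l _ hl ↦ by
      simp only [Finset.mem_insert, Finset.mem_singleton, not_or] at hl
      exact h l hl.1 hl.2.1 hl.2.2,
    Finset.sum_insert (by simp [hij, hik]), Finset.sum_pair hjk, add_assoc]

namespace IsStandardFrameMap

variable {ψ : EuclideanSpace ℂ n → Matrix n n ℂ} {o : n} (hψ : IsStandardFrameMap ψ)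
  (hn : 3 ≤ Fintype.card n)
include hψ hn

theorem functional_equation {j k : n} (hj : o ≠ j) (hk : o ≠ k) (hjk : j ≠ k)
    {u v : EuclideanSpace ℂ n} (hu : u o = 1) (hv : v o = 1)
    (hsupp : ∀ l, l ≠ o → l ≠ j → l ≠ k → u l = 0) :
    1 + star (v j) * u j + star (v k) * u k = 0 ↔
      1 + coslope ψ o v j * slope ψ o u j + coslope ψ o v k * slope ψ o u k = 0 := by
  have hslope (l : n) (ho : l ≠ o) (hj : l ≠ j) (hk : l ≠ k) : slope ψ o u l = 0 := by
    rw [slope, hψ.apply_eq_zero (hsupp l ho hj hk), zero_div]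
  have hinner := hψ.inner_eq_zero_iff hn hu hv
  rw [EuclideanSpace.inner_eq_star_dotProduct, dotProduct_comm, dotProduct, dotProduct,
    sum_eq_add_add hj hk hjk fun l ho hj hk ↦ by rw [hsupp l ho hj hk, mul_zero],
    sum_eq_add_add hj hk hjk fun l ho hj hk ↦ by rw [hslope l ho hj hk, mul_zero],
    hψ.slope_self hn hu, hψ.coslope_self hn hv, Pi.star_apply, hu, hv, star_one,
    mul_one] at hinner
  exact hinner

theorem exists_ringHom_pair {j k : n} (hj : j ≠ o) (hk : k ≠ o) (hjk : j ≠ k) :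
    ∃ F : ℂ →+* ℂ, ∀ l ∈ ({j, k} : Set n), ∀ u v : EuclideanSpace ℂ n, u o = 1 → v o = 1 →
      coslope ψ o v l * slope ψ o u l = F (star (v l) * u l) := by
  let f (l : n) (c : ℂ) : ℂ := slope ψ o (affinePoint o fun _ ↦ c) l
  let g (l : n) (a : ℂ) : ℂ := coslope ψ o (affinePoint o fun _ ↦ star a) l
  have hf {l : n} (hl : l ≠ o) {u : EuclideanSpace ℂ n} (hu : u o = 1) :
      slope ψ o u l = f l (u l) :=
    hψ.slope_eq_of_apply_eq hn hu (affinePoint_self o _) (affinePoint_of_ne hl _).symm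
  have hg {l : n} (hl : l ≠ o) {v : EuclideanSpace ℂ n} (hv : v o = 1) :
      coslope ψ o v l = g l (star (v l)) :=
    hψ.transpose.slope_eq_of_apply_eq hn hv (affinePoint_self o _)
      ((affinePoint_of_ne hl _).trans (star_star _)).symm
  have hf_zero {l : n} (hl : l ≠ o) : f l 0 = 0 := by
    simp only [f, slope, hψ.apply_eq_zero (affinePoint_of_ne hl fun _ ↦ 0), zero_div]
  have hfun (a b c d : ℂ) :
      1 + a * c + b * d = 0 ↔ 1 + g j a * f j c + g k b * f k d = 0 := by
    let p (x y : ℂ) : EuclideanSpace ℂ n := affinePoint o (Pi.single j x + Pi.single k y)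
    have hpo (x y : ℂ) : p x y o = 1 := affinePoint_self o _
    have hpj (x y : ℂ) : p x y j = x := by simp [p, affinePoint_of_ne hj, hjk]
    have hpk (x y : ℂ) : p x y k = y := by simp [p, affinePoint_of_ne hk, hjk.symm]
    have h := hψ.functional_equation hn hj.symm hk.symm hjk (hpo c d) (hpo (star a) (star b))
      fun l ho hj hk ↦ by simp [p, affinePoint_of_ne ho, hj, hk]
    rwa [hf hj (hpo c d), hf hk (hpo c d), hg hj (hpo _ _), hg hk (hpo _ _), hpj, hpj, hpk, hpk,
      star_star, star_star] at h
  obtain ⟨F, hF⟩ := exists_ringHom_of_functional_equation hfun (hf_zero hj) (hf_zero hk)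
  refine ⟨F, ?_⟩
  rintro l (rfl | rfl) u v hu hv
  · rw [hf hj hu, hg hj hv, (hF _ _).1]
  · rw [hf hk hu, hg hk hv, (hF _ _).2]

theorem continuous_slope_affinePoint (j : n) :
    Continuous fun c ↦ slope ψ o (affinePoint o fun _ ↦ c) j := by
  have hpoint : Continuous fun c : ℂ ↦ affinePoint o fun _ ↦ c :=
    (PiLp.continuous_toLp 2 _).comp
      (Continuous.update (continuous_pi fun _ ↦ continuous_id) o continuous_const)
  have hentry (i : n) : Continuous fun c ↦ ψ (affinePoint o fun _ ↦ c) i o := by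
    refine continuous_iff_continuousAt.mpr fun c ↦ ?_
    have hne : affinePoint o (fun _ ↦ c) ≠ 0 := fun h ↦ by
      simpa [affinePoint_self] using congrArg (fun u : EuclideanSpace ℂ n ↦ u o) h
    exact (continuous_apply_apply i o).continuousAt.comp
      (ContinuousAt.comp' (hψ.continuousAt _ hne) hpoint.continuousAt)
  exact (hentry j).div (hentry o) fun c ↦
    hψ.apply_self_ne_zero hn ((affinePoint_self o _).trans_ne one_ne_zero)

theorem exists_continuous_ringHom (o : n) : ∃ F : ℂ →+* ℂ, Continuous F ∧
    ∀ j, ∀ u v : EuclideanSpace ℂ n, u o = 1 → v o = 1 →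
      coslope ψ o v j * slope ψ o u j = F (star (v j) * u j) := by
  obtain ⟨j₀, hj₀, k₀, hk₀, hjk₀⟩ : ∃ j, j ≠ o ∧ ∃ k, k ≠ o ∧ j ≠ k := by
    have hcard : 1 < (Finset.univ.erase o).card := by
      rw [Finset.card_erase_of_mem (Finset.mem_univ o), Finset.card_univ]
      lia
    obtain ⟨j, hj, k, hk, hjk⟩ := Finset.one_lt_card.mp hcard
    exact ⟨j, Finset.ne_of_mem_erase hj, k, Finset.ne_of_mem_erase hk, hjk⟩
  obtain ⟨F, hF⟩ := hψ.exists_ringHom_pair hn hj₀ hk₀ hjk₀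
  have hF_eq (c : ℂ) : F c = coslope ψ o (affinePoint o 1) j₀ *
      slope ψ o (affinePoint o fun _ ↦ c) j₀ := by
    rw [hF j₀ (by simp) _ _ (affinePoint_self o _) (affinePoint_self o _), affinePoint_of_ne hj₀,
      affinePoint_of_ne hj₀, Pi.one_apply, star_one, one_mul]
  refine ⟨F, ?_, fun j u v hu hv ↦ ?_⟩
  · rw [funext hF_eq]
    exact continuous_const.mul (hψ.continuous_slope_affinePoint hn j₀)
  rcases eq_or_ne j o with rfl | hj
  · rw [hψ.slope_self hn hu, hψ.coslope_self hn hv, hu, hv, star_one, mul_one, map_one]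
  rcases eq_or_ne j j₀ with rfl | hjj₀
  · exact hF j (by simp) u v hu hv
  obtain ⟨F', hF'⟩ := hψ.exists_ringHom_pair hn hj hj₀ hjj₀
  have hFF' : F' = F := RingHom.ext fun c ↦ by
    rw [hF_eq, hF' j₀ (by simp) _ _ (affinePoint_self o _) (affinePoint_self o _),
      affinePoint_of_ne hj₀, affinePoint_of_ne hj₀, Pi.one_apply, star_one, one_mul]
  rw [← hFF', hF' j (by simp) u v hu hv]

theorem apply_self_eq_inv {u : EuclideanSpace ℂ n} (hu : u o = 1) :
    ψ u o o = (coslope ψ o u ⬝ᵥ slope ψ o u)⁻¹ := by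
  have ho : ψ u o o ≠ 0 := hψ.apply_self_ne_zero hn (hu.trans_ne one_ne_zero)
  have hsq := congrFun₂ (hψ.mul_self u) o o
  rw [mul_apply] at hsq
  refine eq_inv_of_mul_eq_one_left ?_
  calc ψ u o o * (coslope ψ o u ⬝ᵥ slope ψ o u)
      = (∑ j, ψ u o j * ψ u j o) / ψ u o o := by
        simp only [dotProduct, coslope, slope, transpose_apply, Finset.mul_sum, Finset.sum_div]
        exact Finset.sum_congr rfl fun j _ ↦ by field_simp
    _ = 1 := by rw [hsq, div_self ho]

theorem exists_slope_eq (o : n) : ∃ F : ℂ →+* ℂ, Continuous F ∧ ∃ D : (n → ℂ)ˣ,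
    ∀ u : EuclideanSpace ℂ n, u o = 1 → ∀ j,
      slope ψ o u j = D.val j * F (u j) ∧ coslope ψ o u j = F (star (u j)) * D⁻¹.val j := by
  obtain ⟨F, hFcont, hF⟩ := hψ.exists_continuous_ringHom hn o
  let e : EuclideanSpace ℂ n := WithLp.toLp 2 1
  have he (j : n) : e j = 1 := rfl
  have hinv : slope ψ o e * coslope ψ o e = 1 := by
    ext j
    rw [Pi.mul_apply, mul_comm, hF j e e rfl rfl, he, star_one, one_mul, map_one, Pi.one_apply]
  refine ⟨F, hFcont, ⟨slope ψ o e, coslope ψ o e, hinv, (mul_comm _ _).trans hinv⟩,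
    fun u hu j ↦ ?_⟩
  have hu_slope := hF j u e hu rfl
  have hu_coslope := hF j e u rfl hu
  have hj : slope ψ o e j * coslope ψ o e j = 1 := congrFun hinv j
  rw [he, star_one, one_mul] at hu_slope
  rw [he, mul_one] at hu_coslope
  rw [← hu_slope, ← hu_coslope, Units.inv_mk, mul_assoc, hj, mul_one, ← mul_assoc, hj, one_mul]
  exact ⟨rfl, rfl⟩

theorem exists_eq_conj_map_lineProjection_of_apply_ne_zero (o : n) :
    ∃ F : ℂ →+* ℂ, Continuous F ∧ ∃ T : (Matrix n n ℂ)ˣ, ∀ u : EuclideanSpace ℂ n, u o ≠ 0 →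
      ψ u = T * (lineProjection u).val.map F * (T⁻¹ : (Matrix n n ℂ)ˣ) := by
  obtain ⟨F, hF, D, hD⟩ := hψ.exists_slope_eq hn o
  refine ⟨F, hF, Units.map (diagonalRingHom n ℂ).toMonoidHom D, fun u hu ↦ ?_⟩
  suffices h : ∀ u : EuclideanSpace ℂ n, u o = 1 →
      ψ u = diagonal D.val * (lineProjection u).val.map F * diagonal D⁻¹.val by
    have hscale := h ((u o)⁻¹ • u) (inv_mul_cancel₀ hu)
    rwa [hψ.map_smul _ _ (inv_ne_zero hu), lineProjection_smul _ (inv_ne_zero hu)] at hscale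
  intro u hu
  have hnorm : ψ u o o = F (inner ℂ u u)⁻¹ := by
    rw [hψ.apply_self_eq_inv hn hu, map_inv₀, EuclideanSpace.inner_eq_star_dotProduct,
      dotProduct_comm, dotProduct, dotProduct, map_sum]
    refine congrArg _ (Finset.sum_congr rfl fun j _ ↦ ?_)
    have hj : D.val j * D⁻¹.val j = 1 := congrFun D.mul_inv j
    rw [(hD u hu j).1, (hD u hu j).2, map_mul, Pi.star_apply]
    linear_combination F (star (u j)) * F (u j) * hj
  ext i j
  rw [hψ.eq_smul_vecMulVec_slope (hψ.apply_self_ne_zero hn (hu.trans_ne one_ne_zero)), hnorm,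
    mul_diagonal, diagonal_mul, map_apply, coe_lineProjection, Matrix.smul_apply, Matrix.smul_apply,
    vecMulVec_apply, vecMulVec_apply, (hD u hu i).1, (hD u hu j).2, smul_eq_mul, smul_eq_mul,
    map_mul, map_mul, Pi.star_apply]
  ring

theorem exists_eq_conj_map_lineProjection : ∃ F : ℂ →+* ℂ, Continuous F ∧
    ∃ T : (Matrix n n ℂ)ˣ, ∀ u,
      ψ u = T * (lineProjection u).val.map F * (T⁻¹ : (Matrix n n ℂ)ˣ) := by
  obtain ⟨o⟩ : Nonempty n := Fintype.card_pos_iff.mp (by lia)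
  obtain ⟨F, hF, T, hT⟩ := hψ.exists_eq_conj_map_lineProjection_of_apply_ne_zero hn o
  refine ⟨F, hF, T, fun u ↦ ?_⟩
  rcases ne_or_eq (u o) 0 with ho | ho
  · exact hT u ho
  rcases eq_or_ne u 0 with rfl | hu
  · ext i j
    simp [hψ.map_zero, coe_lineProjection]
  let path (t : ℂ) : EuclideanSpace ℂ n := u + t • EuclideanSpace.single o 1
  have hpath : ContinuousAt path 0 := by fun_prop
  have hpath_zero : path 0 = u := by simp [path]
  have hline : ContinuousAt (fun v ↦ T.val * (lineProjection v).val.map F * T⁻¹.val) u :=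
    ContinuousAt.comp' (f := lineProjection)
      ((continuous_const.matrix_mul (continuous_subtype_val.matrix_map hF)).matrix_mul
        continuous_const).continuousAt
      (continuousAt_lineProjection hu)
  have heq := ((hψ.continuousAt u hu).comp_of_eq hpath hpath_zero)
    |>.eventuallyEq_nhds_iff_eventuallyEq_nhdsNE (hline.comp_of_eq hpath hpath_zero)
    |>.mp (Filter.eventually_of_mem self_mem_nhdsWithin fun t ht ↦ hT (path t) (by
      simpa [path, ho] using ht))
  simpa [hpath_zero] using heq.eq_of_nhds

end IsStandardFrameMap

theorem IsFrameMap.eq_conj_lineProjection_or_transpose {ψ : EuclideanSpace ℂ n → Matrix n n ℂ}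
    (hψ : IsFrameMap ψ) (hn : 3 ≤ Fintype.card n) : ∃ T : (Matrix n n ℂ)ˣ,
      (∀ u, ψ u = T * (lineProjection u).val * (T⁻¹ : (Matrix n n ℂ)ˣ)) ∨
      ∀ u, ψ u = T * (lineProjection u).valᵀ * (T⁻¹ : (Matrix n n ℂ)ˣ) := by
  obtain ⟨S, hS⟩ := hψ.exists_frame (EuclideanSpace.basisFun n ℂ)
  have hstd : IsStandardFrameMap fun u ↦ (S⁻¹ : (Matrix n n ℂ)ˣ) * ψ u * (S : Matrix n n ℂ) :=
    { toIsFrameMap := by simpa using hψ.units_conj S⁻¹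
      map_single := fun i ↦ by
        rw [← EuclideanSpace.basisFun_apply, hS]
        simp [mul_assoc] }
  obtain ⟨F, hF, T, hT⟩ := hstd.exists_eq_conj_map_lineProjection hn
  have hψT (u) : ψ u = (S * T : (Matrix n n ℂ)ˣ) * (lineProjection u).val.map F *
      ((S * T)⁻¹ : (Matrix n n ℂ)ˣ) := by
    calc ψ u = S * ((S⁻¹ : (Matrix n n ℂ)ˣ) * ψ u * (S : Matrix n n ℂ)) *
          (S⁻¹ : (Matrix n n ℂ)ˣ) := by simp [mul_assoc]
      _ = _ := by
        rw [hT u]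
        simp [mul_assoc, _root_.mul_inv_rev]
  refine ⟨S * T, ?_⟩
  rcases Complex.ringHom_eq_id_or_conj_of_continuous hF with rfl | rfl
  · exact .inl fun u ↦ by simpa using hψT u
  · refine .inr fun u ↦ ?_
    rw [hψT, transpose_lineProjection]
    rfl

end Reconstruction

section NormalMatrices

theorem conjDiagonal_eq_sum_lineProjection (b : OrthonormalBasis n ℂ (EuclideanSpace ℂ n))
    (d : n → ℂ) :
    (conjDiagonal (basisUnitary b) d).val = ∑ i, d i • (lineProjection (b i)).val := by
  simp only [lineProjection_basis, coe_conjDiagonal]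
  exact mul_diagonal_mul_eq_sum _ _ d

namespace IsNormalPreserver

variable {φ : NormalMatrix n → Matrix n n ℂ} (hφ : IsNormalPreserver φ)
include hφ

theorem isFrameMap : IsFrameMap fun u ↦ φ (lineProjection u) where
  continuousAt u hu := hφ.continuous.continuousAt.comp (continuousAt_lineProjection hu)
  map_zero := by
    have hzero : lineProjection (0 : EuclideanSpace ℂ n) = conjDiagonal 1 0 :=
      Subtype.ext (by simp [coe_lineProjection, coe_conjDiagonal])
    obtain ⟨T, hT⟩ := hφ.exists_frame 1
    rw [hzero, hT, diagonal_zero', mul_zero, zero_mul]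
  map_smul c u hc := by rw [lineProjection_smul u hc]
  exists_frame b := by
    obtain ⟨T, hT⟩ := hφ.exists_frame (basisUnitary b)
    exact ⟨T, fun i ↦ by rw [lineProjection_basis, hT, diagonal_single]⟩

theorem map_conjDiagonal (b : OrthonormalBasis n ℂ (EuclideanSpace ℂ n)) (d : n → ℂ) :
    φ (conjDiagonal (basisUnitary b) d) = ∑ i, d i • φ (lineProjection (b i)) := by
  obtain ⟨T, hT⟩ := hφ.exists_frame (basisUnitary b)
  simp only [lineProjection_basis, hT]
  exact mul_diagonal_mul_eq_sum _ _ d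

theorem eq_of_map_lineProjection (f : Matrix n n ℂ →ₗ[ℂ] Matrix n n ℂ)
    (h : ∀ u, φ (lineProjection u) = f (lineProjection u).val) (X : NormalMatrix n) :
    φ X = f X.val := by
  obtain ⟨b, d, rfl⟩ := exists_eq_conjDiagonal X
  simp only [hφ.map_conjDiagonal, conjDiagonal_eq_sum_lineProjection, map_sum, _root_.map_smul, h]

end IsNormalPreserver
end NormalMatrices

end NormalPreserver

open NormalPreserver in
theorem preserver_normal_general {n : Type*} [Fintype n] [DecidableEq n]
    (hn : 3 ≤ Fintype.card n) {φ : NormalMatrix n → Matrix n n ℂ} (hφ : IsNormalPreserver φ) :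
    ∃ T : Matrix n n ℂ, IsUnit T ∧
      ((∀ X, φ X = T * X.val * T⁻¹) ∨ (∀ X, φ X = T * X.val.transpose * T⁻¹)) := by
  obtain ⟨T, hT⟩ := hφ.isFrameMap.eq_conj_lineProjection_or_transpose hn
  let conj := LinearMap.mulLeftRight ℂ (T.val, T⁻¹.val)
  refine ⟨T, T.isUnit, ?_⟩
  rw [← coe_units_inv]
  exact hT.imp (hφ.eq_of_map_lineProjection conj) fun h ↦
    hφ.eq_of_map_lineProjection (conj ∘ₗ (transposeLinearEquiv n n ℂ ℂ).toLinearMap) h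

/-- For `n ≥ 3`, any continuous, commutativity-preserving and
spectrum-shrinking map `φ : N_n → M_n` defined on the set of normal matrices is of the
form `φ(X) = T X T⁻¹` or `φ(X) = T Xᵗ T⁻¹` for some `T ∈ GL(n)`. -/
theorem preserver_normal (n : ℕ) (hn : 3 ≤ n)
    (φ : {X : Matrix (Fin n) (Fin n) ℂ // X * X.conjTranspose = X.conjTranspose * X} →
      Matrix (Fin n) (Fin n) ℂ)
    (hcont : Continuous φ)
    (hcomm : ∀ X Y, X.val * Y.val = Y.val * X.val → φ X * φ Y = φ Y * φ X)
    (hshrink : ∀ X, spectrum ℂ (φ X) ⊆ spectrum ℂ X.val) :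
    ∃ T : Matrix (Fin n) (Fin n) ℂ, IsUnit T ∧
      ((∀ X, φ X = T * X.val * T⁻¹) ∨ (∀ X, φ X = T * X.val.transpose * T⁻¹)) :=
  preserver_normal_general (hn.trans_eq (Fintype.card_fin n).symm) ⟨hcont, hcomm, hshrink⟩
end
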